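/- arXiv:1208.5225 — 2 statements merged into one kernel-verified Lean document; each statement's English description precedes it below -/
import Mathlib

section
/- Suppose the GI/G/1-type Markov chain is irreducible, aperiodic and positive recurrent, the phase matrix A is stochastic, and φ_{A+} > 1. Then χ(z) < 1 for every real z with 1 < z < min(φ_{A+}, η), and for each such z there exists a Perron–Frobenius right eigenvector Y(z) with all entries ≥ 1 satisfying A*(z) Y(z) = χ(z) Y(z). -/
open Filter Topology
open scoped ENNReal NNReal BigOperators

namespace GIG1

/-- The state space of a `GI/G/1`-type Markov chain: level `i : ℕ`, phase `j : Fin m`. -/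
abbrev S (m : ℕ) := ℕ × Fin m

/-- The transition kernel of the `GI/G/1`-type Markov chain with matrix blocks `A, B`. -/
noncomputable def P {m : ℕ} (A B : ℤ → Matrix (Fin m) (Fin m) ℝ) : S m → S m → ℝ
  | (0, j), (k, s) => B (k : ℤ) j s
  | (i + 1, j), (0, s) => B (-(i + 1 : ℤ)) j s
  | (i + 1, j), (k + 1, s) => A ((k : ℤ) - (i : ℤ)) j s

/-- `n`-step transition probabilities. -/
noncomputable def Pn {m : ℕ} (P : S m → S m → ℝ) : ℕ → S m → S m → ℝ
  | 0, x, y => if x = y then 1 else 0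
  | n + 1, x, y => ∑' z : S m, P x z * Pn P n z y

def Stochastic {m : ℕ} (P : S m → S m → ℝ) : Prop :=
  (∀ x y, 0 ≤ P x y) ∧ ∀ x, HasSum (P x) 1

def ChainIrreducible {m : ℕ} (P : S m → S m → ℝ) : Prop :=
  ∀ x y, ∃ n, 1 ≤ n ∧ 0 < Pn P n x y

def ChainAperiodic {m : ℕ} (P : S m → S m → ℝ) : Prop :=
  ∀ x, ∃ N, ∀ n ≥ N, 0 < Pn P n x x

/-- `pd` is a stationary probability distribution of `P`; for an irreducible aperiodic chain
this is equivalent to positive recurrence. -/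
def IsStationary {m : ℕ} (P : S m → S m → ℝ) (pd : S m → ℝ) : Prop :=
  (∀ x, 0 ≤ pd x) ∧ HasSum pd 1 ∧ ∀ y, HasSum (fun x => pd x * P x y) (pd y)

/-- The phase matrix `A = ∑ₖ Aₖ`. -/
noncomputable def matA {m : ℕ} (A : ℤ → Matrix (Fin m) (Fin m) ℝ) : Matrix (Fin m) (Fin m) ℝ :=
  Matrix.of fun r s => ∑' k : ℤ, A k r s

/-- The phase matrix `A = ∑ₖ Aₖ` is stochastic. -/
def PhaseStochastic {m : ℕ} (A : ℤ → Matrix (Fin m) (Fin m) ℝ) : Prop :=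
  ∀ r, HasSum (fun p : ℤ × Fin m => A p.1 r p.2) 1

/-- Irreducibility of a nonnegative matrix. -/
def MatIrreducible {m : ℕ} (M : Matrix (Fin m) (Fin m) ℝ) : Prop :=
  ∀ r s, ∃ n, 1 ≤ n ∧ 0 < (M ^ n) r s

/-- Radius of convergence of a power series with nonnegative coefficients. -/
noncomputable def radius (c : ℕ → ℝ) : ℝ≥0∞ :=
  ⨆ (r : ℝ≥0) (_ : Summable fun k => c k * (r : ℝ) ^ k), (r : ℝ≥0∞)

/-- `φ_{A+}`: the minimum over entries of the radii of convergence of `∑_{k ≥ 1} A_k(r,s) z^k`. -/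
noncomputable def phiA {m : ℕ} (A : ℤ → Matrix (Fin m) (Fin m) ℝ) : ℝ≥0∞ :=
  ⨅ (r : Fin m) (s : Fin m), radius fun k => A ((k : ℤ) + 1) r s

/-- `φ_{B+}`. -/
noncomputable def phiB {m : ℕ} (B : ℤ → Matrix (Fin m) (Fin m) ℝ) : ℝ≥0∞ :=
  ⨅ (r : Fin m) (s : Fin m), radius fun k => B ((k : ℤ) + 1) r s

/-- The matrix sequence `{C_k}_{k ≥ 1}` is light-tailed. -/
def LightMat {m : ℕ} (C : ℤ → Matrix (Fin m) (Fin m) ℝ) : Prop :=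
  ∀ r s, ∃ ε > (0 : ℝ),
    Summable fun k : ℕ => C ((k : ℤ) + 1) r s * Real.exp (ε * ((k : ℝ) + 1))

/-- `A^*(z) = ∑_{k ∈ ℤ} z^k A_k` for complex `z`. -/
noncomputable def AstarC {m : ℕ} (A : ℤ → Matrix (Fin m) (Fin m) ℝ) (z : ℂ) :
    Matrix (Fin m) (Fin m) ℂ :=
  Matrix.of fun r s => ∑' k : ℤ, (A k r s : ℂ) * z ^ k

/-- `A^*(z) = ∑_{k ∈ ℤ} z^k A_k` for real `z`. -/
noncomputable def AstarR {m : ℕ} (A : ℤ → Matrix (Fin m) (Fin m) ℝ) (z : ℝ) :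
    Matrix (Fin m) (Fin m) ℝ :=
  Matrix.of fun r s => ∑' k : ℤ, A k r s * z ^ k

/-- The set `Ω = {z ∈ ℂ : 1 < |z| < φ_{A+}, det(I - A^*(z)) = 0}`. -/
def Omega {m : ℕ} (A : ℤ → Matrix (Fin m) (Fin m) ℝ) : Set ℂ :=
  {z | 1 < ‖z‖ ∧ ENNReal.ofReal ‖z‖ < phiA A ∧ (1 - AstarC A z).det = 0}

/-- `η`: the minimal modulus of an element of `Ω`, or `∞` when `Ω = ∅`. -/
noncomputable def eta {m : ℕ} (A : ℤ → Matrix (Fin m) (Fin m) ℝ) : ℝ≥0∞ :=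
  sInf ((fun z : ℂ => ENNReal.ofReal ‖z‖) '' Omega A)

/-- The largest (Perron–Frobenius) eigenvalue of a nonnegative matrix. -/
noncomputable def chi {m : ℕ} (M : Matrix (Fin m) (Fin m) ℝ) : ℝ :=
  sSup {r : ℝ | ∃ v : Fin m → ℝ, v ≠ 0 ∧ M.mulVec v = r • v}

/-!
On `(1, min φ_{A+} η)` the function `χ(z)` is continuous and never equals `1`, since a fixed vector
of `A*(z)` would put `z` into `Ω`; so it suffices to find one `w` near `1` with `χ(w) < 1`.

Let `α` be the stationary law of the phase matrix. If the mean jump `α · d` is negative, solve the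
Poisson equation `d + A h - h = (α · d) e`: the vector `e + (w - 1) h` is strictly decreased by
`A*(w)` to first order at `w = 1`, whence `χ(w) < 1` by Collatz–Wielandt. Cutting off jumps below
`-K` only increases `A*(w)`, so it is enough that the mean of the cut-off jumps is negative for
some `K`; this also covers jumps of mean `-∞`.

Otherwise the jumps are integrable with nonnegative mean, and with `h ≤ 0` solving the Poisson
equation the function `f(i, j) = (i + h(j))⁺` has nonnegative drift wherever it is positive. Under
the stationary law the total drift vanishes, so the chain cannot leave `{f = 0}`, contradicting
irreducibility.
-/

/-! ### Perron–Frobenius theory -/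

section NonnegMatrix

lemma exists_le_smul_and_eq_mul {ι : Type*} [Finite ι] [Nonempty ι] (u : ι → ℝ) {v : ι → ℝ}
    (hv : ∀ i, 0 < v i) : ∃ c : ℝ, u ≤ c • v ∧ ∃ i, u i = c * v i := by
  obtain ⟨i, hi⟩ := Finite.exists_max fun i => u i / v i
  exact ⟨u i / v i, fun j => (div_le_iff₀ (hv j)).mp (hi j), i,
    (div_mul_cancel₀ _ (hv i).ne').symm⟩

variable {ι : Type*} [Fintype ι] {M : Matrix ι ι ℝ}

lemma mulVec_mono_of_nonneg (hM : ∀ i j, 0 ≤ M i j) {u v : ι → ℝ} (huv : u ≤ v) :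
    M.mulVec u ≤ M.mulVec v :=
  fun i => dotProduct_le_dotProduct_of_nonneg_left huv (hM i)

lemma abs_mulVec_le_mulVec_abs (hM : ∀ i j, 0 ≤ M i j) (u : ι → ℝ) (i : ι) :
    |M.mulVec u i| ≤ M.mulVec |u| i :=
  calc |M.mulVec u i| ≤ ∑ j, |M i j * u j| := Finset.abs_sum_le_sum_abs _ _
    _ = M.mulVec |u| i := Finset.sum_congr rfl fun j _ => by
      rw [abs_mul, abs_of_nonneg (hM i j), Pi.abs_apply]

lemma abs_eigenvalue_le_of_mulVec_le_smul (hM : ∀ i j, 0 ≤ M i j) {t μ : ℝ} {u v : ι → ℝ}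
    (hv : ∀ i, 0 < v i) (hMv : M.mulVec v ≤ t • v) (hu : u ≠ 0) (hMu : M.mulVec u = μ • u) :
    |μ| ≤ t := by
  obtain ⟨j, hj⟩ := Function.ne_iff.mp hu
  have : Nonempty ι := ⟨j⟩
  obtain ⟨c, huc, i, hui⟩ := exists_le_smul_and_eq_mul |u| hv
  have hc : 0 < c := pos_of_mul_pos_left ((abs_pos.mpr hj).trans_le (huc j)) (hv j).le
  refine le_of_mul_le_mul_right ?_ (mul_pos hc (hv i))
  calc |μ| * (c * v i) = |M.mulVec u i| := by
        rw [← hui, hMu, Pi.smul_apply, smul_eq_mul, abs_mul, Pi.abs_apply]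
    _ ≤ M.mulVec |u| i := abs_mulVec_le_mulVec_abs hM u i
    _ ≤ M.mulVec (c • v) i := mulVec_mono_of_nonneg hM huc i
    _ = c * M.mulVec v i := by rw [Matrix.mulVec_smul, Pi.smul_apply, smul_eq_mul]
    _ ≤ c * (t * v i) := mul_le_mul_of_nonneg_left (hMv i) hc.le
    _ = t * (c * v i) := by ring

lemma mulVec_pos_of_pos {Q : Matrix ι ι ℝ} (hQ : ∀ i j, 0 < Q i j) {v : ι → ℝ} (hv : 0 ≤ v)
    (hv₀ : v ≠ 0) (i : ι) : 0 < Q.mulVec v i := by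
  obtain ⟨j, hj⟩ := Function.ne_iff.mp hv₀
  exact Finset.sum_pos' (fun k _ => mul_nonneg (hQ i k).le (hv k))
    ⟨j, Finset.mem_univ j, mul_pos (hQ i j) ((hv j).lt_of_ne hj.symm)⟩

/-- The pairs `(t, v)` with `v` in the simplex and `M v ≤ t v`; the least such `t` is the Perron
eigenvalue of an irreducible `M` (Collatz–Wielandt). -/
def subinvariantPairs (M : Matrix ι ι ℝ) : Set (ℝ × (ι → ℝ)) :=
  {p | p.2 ∈ stdSimplex ℝ ι ∧ M.mulVec p.2 ≤ p.1 • p.2}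

lemma exists_mem_subinvariantPairs [Nonempty ι] {v : ι → ℝ} (hv : ∀ i, 0 < v i) {t : ℝ}
    (hle : M.mulVec v ≤ t • v) : ∃ w, (t, w) ∈ subinvariantPairs M := by
  have hsum : 0 < ∑ i, v i := Finset.sum_pos (fun i _ => hv i) Finset.univ_nonempty
  have hinv := inv_nonneg.mpr hsum.le
  refine ⟨(∑ i, v i)⁻¹ • v, ⟨fun i => mul_nonneg hinv (hv i).le, ?_⟩, ?_⟩
  · simp only [Pi.smul_apply, smul_eq_mul, ← Finset.mul_sum]
    exact inv_mul_cancel₀ hsum.ne'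
  · rw [Matrix.mulVec_smul, smul_comm]
    exact smul_le_smul_of_nonneg_left hle hinv

lemma exists_min_subinvariantPairs [Nonempty ι] (hM : ∀ i j, 0 ≤ M i j) :
    ∃ p ∈ subinvariantPairs M, ∀ q ∈ subinvariantPairs M, p.1 ≤ q.1 := by
  have hnonneg : ∀ p ∈ subinvariantPairs M, 0 ≤ p.1 := by
    rintro ⟨t, v⟩ ⟨hv, hle⟩
    obtain ⟨i, -, hi⟩ := Finset.exists_ne_zero_of_sum_ne_zero (hv.2.trans_ne one_ne_zero)
    refine nonneg_of_mul_nonneg_left ?_ ((hv.1 i).lt_of_ne hi.symm)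
    exact (Finset.sum_nonneg fun j _ => mul_nonneg (hM i j) (hv.1 j)).trans (hle i)
  obtain ⟨C, hC, -⟩ := exists_le_smul_and_eq_mul (M.mulVec 1) (v := 1) fun _ => one_pos
  obtain ⟨w, hw⟩ := exists_mem_subinvariantPairs (fun _ => one_pos) hC
  have hclosed : IsClosed (subinvariantPairs M) :=
    ((isClosed_stdSimplex ℝ ι).preimage continuous_snd).inter <|
      isClosed_le (continuous_const.matrix_mulVec continuous_snd)
        (continuous_fst.smul continuous_snd)
  have hcompact : IsCompact (subinvariantPairs M ∩ Set.Icc 0 C ×ˢ stdSimplex ℝ ι) :=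
    (isCompact_Icc.prod (isCompact_stdSimplex ℝ ι)).inter_left hclosed
  obtain ⟨p, hp, hmin⟩ := hcompact.exists_isMinOn ⟨(C, w), hw, ⟨hnonneg _ hw, le_rfl⟩, hw.1⟩
    continuous_fst.continuousOn
  refine ⟨p, hp.1, fun q hq => ?_⟩
  rcases le_total q.1 C with hqC | hqC
  · exact hmin ⟨hq, ⟨hnonneg q hq, hqC⟩, hq.1⟩
  · exact hp.2.1.2.trans hqC

end NonnegMatrix

section Perron

lemma isIrreducible_of_forall_pos_imp_pos {ι : Type*} {M N : Matrix ι ι ℝ}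
    (hM : M.IsIrreducible) (hN : ∀ i j, 0 ≤ N i j) (hMN : ∀ i j, 0 < M i j → 0 < N i j) :
    N.IsIrreducible := by
  let F : @Prefunctor ι M.toQuiver ι N.toQuiver :=
    @Prefunctor.mk ι M.toQuiver ι N.toQuiver id fun {k l} e => ⟨hMN k l e.down⟩
  refine ⟨hN, fun i j => ?_⟩
  obtain ⟨p, hp⟩ := hM.connected i j
  refine ⟨@Prefunctor.mapPath ι M.toQuiver ι N.toQuiver F i j p, ?_⟩
  cases p with
  | nil => exact hp
  | cons p e => exact Nat.succ_pos _

variable {ι : Type*} [Fintype ι] {M : Matrix ι ι ℝ}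

lemma exists_pos_commute_of_isIrreducible (hM : M.IsIrreducible) :
    ∃ Q : Matrix ι ι ℝ, (∀ i j, 0 < Q i j) ∧ Commute M Q := by
  classical
  choose n _ hn using (Matrix.isIrreducible_iff_exists_pow_pos hM.nonneg).mp hM
  refine ⟨∑ i, ∑ j, M ^ n i j, fun i j => ?_, ?_⟩
  · have hnn : ∀ k l, 0 ≤ (M ^ n k l) i j := fun k l => Matrix.pow_apply_nonneg hM.nonneg _ i j
    simp only [Matrix.sum_apply]
    refine Finset.sum_pos' (fun k _ => Finset.sum_nonneg fun l _ => hnn k l)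
      ⟨i, Finset.mem_univ i, Finset.sum_pos' (fun l _ => hnn i l) ⟨j, Finset.mem_univ j, hn i j⟩⟩
  · exact Commute.sum_right _ _ _ fun i _ => Commute.sum_right _ _ _ fun j _ =>
      (Commute.refl M).pow_right _

lemma pow_mulVec_eq_pow_smul [DecidableEq ι] {t : ℝ} {v : ι → ℝ} (hv : M.mulVec v = t • v)
    (n : ℕ) : (M ^ n).mulVec v = t ^ n • v := by
  induction n with
  | zero => simp
  | succ n ih =>
    rw [pow_succ, ← Matrix.mulVec_mulVec, hv, Matrix.mulVec_smul, ih, smul_smul, pow_succ']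

lemma pos_of_isIrreducible_of_mulVec_eq_smul (hM : M.IsIrreducible) {t : ℝ} {v : ι → ℝ}
    (hv : 0 ≤ v) (hv₀ : v ≠ 0) (hMv : M.mulVec v = t • v) (i : ι) : 0 < v i := by
  classical
  obtain ⟨j, hj⟩ := Function.ne_iff.mp hv₀
  obtain ⟨n, -, hn⟩ := (Matrix.isIrreducible_iff_exists_pow_pos hM.nonneg).mp hM i j
  have hpos : 0 < (M ^ n).mulVec v i :=
    Finset.sum_pos' (fun k _ => mul_nonneg (Matrix.pow_apply_nonneg hM.nonneg n i k) (hv k))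
      ⟨j, Finset.mem_univ j, mul_pos hn ((hv j).lt_of_ne hj.symm)⟩
  rw [pow_mulVec_eq_pow_smul hMv] at hpos
  exact (hv i).lt_of_ne fun h => by simp [← h] at hpos

lemma exists_pos_mulVec_lt_of_mulVec_le (hM : M.IsIrreducible) {t : ℝ} {v : ι → ℝ}
    (hv : 0 ≤ v) (hv₀ : v ≠ 0) (hle : M.mulVec v ≤ t • v) (hne : M.mulVec v ≠ t • v) :
    ∃ w : ι → ℝ, (∀ i, 0 < w i) ∧ ∀ i, M.mulVec w i < t * w i := by
  obtain ⟨Q, hQ, hcomm⟩ := exists_pos_commute_of_isIrreducible hM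
  refine ⟨Q.mulVec v, mulVec_pos_of_pos hQ hv hv₀, fun i => ?_⟩
  have hpos := mulVec_pos_of_pos hQ (sub_nonneg.mpr hle) (sub_ne_zero.mpr hne.symm) i
  rwa [Matrix.mulVec_sub, Matrix.mulVec_smul, Matrix.mulVec_mulVec, ← hcomm.eq,
    ← Matrix.mulVec_mulVec, Pi.sub_apply, Pi.smul_apply, smul_eq_mul, sub_pos] at hpos

theorem exists_pos_eigenvector_of_isIrreducible [Nonempty ι] (hM : M.IsIrreducible) :
    ∃ (t : ℝ) (v : ι → ℝ), (∀ i, 0 < v i) ∧ M.mulVec v = t • v := by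
  obtain ⟨⟨t, v⟩, ⟨hv, hle⟩, hmin⟩ := exists_min_subinvariantPairs hM.nonneg
  have hv₀ : v ≠ 0 := by
    rintro rfl
    simpa using hv.2
  refine ⟨t, v, ?_⟩
  suffices heq : M.mulVec v = t • v from
    ⟨pos_of_isIrreducible_of_mulVec_eq_smul hM hv.1 hv₀ heq, heq⟩
  by_contra hne
  obtain ⟨w, hw, hlt⟩ := exists_pos_mulVec_lt_of_mulVec_le hM hv.1 hv₀ hle hne
  obtain ⟨c, hc, i, hi⟩ := exists_le_smul_and_eq_mul (M.mulVec w) hw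
  obtain ⟨u, hu⟩ := exists_mem_subinvariantPairs hw hc
  have hct : c < t := lt_of_mul_lt_mul_right (hi ▸ hlt i) (hw i).le
  exact hct.not_ge (hmin _ hu)

end Perron

section Chi

variable {m : ℕ} {M : Matrix (Fin m) (Fin m) ℝ}

lemma MatIrreducible.isIrreducible (hM : ∀ r s, 0 ≤ M r s) (hirr : MatIrreducible M) :
    M.IsIrreducible :=
  (Matrix.isIrreducible_iff_exists_pow_pos hM).mpr hirr

variable [NeZero m]

lemma chi_eq_of_mulVec_eq_smul (hM : ∀ r s, 0 ≤ M r s) {t : ℝ} {v : Fin m → ℝ}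
    (hv : ∀ r, 0 < v r) (hMv : M.mulVec v = t • v) : chi M = t :=
  IsGreatest.csSup_eq ⟨⟨v, Function.ne_iff.mpr ⟨0, (hv 0).ne'⟩, hMv⟩, fun _μ ⟨_u, hu, hMu⟩ =>
    (le_abs_self _).trans (abs_eigenvalue_le_of_mulVec_le_smul hM hv hMv.le hu hMu)⟩

lemma exists_pos_mulVec_eq_chi_smul (hM : M.IsIrreducible) :
    ∃ v : Fin m → ℝ, (∀ r, 0 < v r) ∧ M.mulVec v = chi M • v := by
  obtain ⟨t, v, hv, hMv⟩ := exists_pos_eigenvector_of_isIrreducible hM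
  exact ⟨v, hv, by rwa [chi_eq_of_mulVec_eq_smul hM.nonneg hv hMv]⟩

lemma exists_one_le_mulVec_eq_chi_smul (hM : M.IsIrreducible) :
    ∃ Y : Fin m → ℝ, (∀ r, 1 ≤ Y r) ∧ M.mulVec Y = chi M • Y := by
  obtain ⟨v, hv, hMv⟩ := exists_pos_mulVec_eq_chi_smul hM
  obtain ⟨c, hc, -⟩ := exists_le_smul_and_eq_mul 1 hv
  exact ⟨c • v, hc, by rw [Matrix.mulVec_smul, hMv, smul_comm]⟩

lemma chi_lt_of_mulVec_lt (hM : M.IsIrreducible) {t : ℝ} {V : Fin m → ℝ}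
    (hV : ∀ r, 0 < V r) (hMV : ∀ r, M.mulVec V r < t * V r) : chi M < t := by
  obtain ⟨v, hv, hMv⟩ := exists_pos_mulVec_eq_chi_smul hM
  obtain ⟨c, hc, r, hr⟩ := exists_le_smul_and_eq_mul (M.mulVec V) hV
  have hct : c < t := lt_of_mul_lt_mul_right (hr ▸ hMV r) (hV r).le
  refine lt_of_le_of_lt ((le_abs_self _).trans ?_) hct
  exact abs_eigenvalue_le_of_mulVec_le_smul hM.nonneg hV hc
    (Function.ne_iff.mpr ⟨0, (hv 0).ne'⟩) hMv

lemma lt_chi_of_lt_mulVec (hM : M.IsIrreducible) {t : ℝ} {V : Fin m → ℝ}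
    (hV : ∀ r, 0 < V r) (hMV : ∀ r, t * V r < M.mulVec V r) : t < chi M := by
  obtain ⟨v, hv, hMv⟩ := exists_pos_mulVec_eq_chi_smul hM
  obtain ⟨c, hc, r, hr⟩ := exists_le_smul_and_eq_mul V hv
  refine lt_of_mul_lt_mul_right ?_ (hV r).le
  calc t * V r < M.mulVec V r := hMV r
    _ ≤ M.mulVec (c • v) r := mulVec_mono_of_nonneg hM.nonneg hc r
    _ = chi M * V r := by
      rw [Matrix.mulVec_smul, hMv, hr]
      simp only [Pi.smul_apply, smul_eq_mul]
      ring

lemma continuousOn_chi {X : Type*} [TopologicalSpace X] {s : Set X}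
    {N : X → Matrix (Fin m) (Fin m) ℝ} (hN : ContinuousOn N s)
    (hirr : ∀ x ∈ s, (N x).IsIrreducible) : ContinuousOn (fun x => chi (N x)) s := by
  intro x hx
  obtain ⟨v, hv, hNv⟩ := exists_pos_mulVec_eq_chi_smul (hirr x hx)
  have hlim : ∀ r, Tendsto (fun y => (N y).mulVec v r) (𝓝[s] x) (𝓝 (chi (N x) * v r)) := by
    intro r
    have hcont : ContinuousWithinAt (fun y => (N y).mulVec v r) s x :=
      ((continuous_apply r).comp
        (continuous_id.matrix_mulVec continuous_const)).continuousAt.comp_continuousWithinAt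
        (hN x hx)
    rwa [ContinuousWithinAt, hNv] at hcont
  refine tendsto_order.mpr ⟨fun t ht => ?_, fun t ht => ?_⟩
  · filter_upwards [eventually_all.mpr fun r => (hlim r).eventually_const_lt
      (mul_lt_mul_of_pos_right ht (hv r)), self_mem_nhdsWithin] with y hy hys
    exact lt_chi_of_lt_mulVec (hirr y hys) hv hy
  · filter_upwards [eventually_all.mpr fun r => (hlim r).eventually_lt_const
      (mul_lt_mul_of_pos_right ht (hv r)), self_mem_nhdsWithin] with y hy hys
    exact chi_lt_of_mulVec_lt (hirr y hys) hv hy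

end Chi

/-! ### The Poisson equation -/

section StochasticMatrix

variable {ι : Type*} [Fintype ι] [Nonempty ι] {M : Matrix ι ι ℝ}

lemma exists_pos_stationary_of_isIrreducible (hM : M.IsIrreducible) (hM1 : M.mulVec 1 = 1) :
    ∃ α : ι → ℝ, (∀ i, 0 < α i) ∧ α ⬝ᵥ 1 = 1 ∧ Matrix.vecMul α M = α := by
  obtain ⟨t, v, hv, hMv⟩ := exists_pos_eigenvector_of_isIrreducible hM.transpose
  rw [Matrix.mulVec_transpose] at hMv
  have hsum : 0 < v ⬝ᵥ 1 := by
    rw [dotProduct_one]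
    exact Finset.sum_pos (fun i _ => hv i) Finset.univ_nonempty
  have ht : t = 1 := mul_right_cancel₀ hsum.ne' <| calc
    t * (v ⬝ᵥ 1) = Matrix.vecMul v M ⬝ᵥ 1 := by rw [hMv, smul_dotProduct, smul_eq_mul]
    _ = 1 * (v ⬝ᵥ 1) := by rw [← Matrix.dotProduct_mulVec, hM1, one_mul]
  refine ⟨(v ⬝ᵥ 1)⁻¹ • v, fun i => mul_pos (inv_pos.mpr hsum) (hv i), ?_, ?_⟩
  · rw [smul_dotProduct, smul_eq_mul, inv_mul_cancel₀ hsum.ne']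
  · rw [Matrix.smul_vecMul, hMv, ht, one_smul]

lemma eq_smul_one_of_harmonic (hM : M.IsIrreducible) (hM1 : M.mulVec 1 = 1) {h : ι → ℝ}
    (hh : M.mulVec h = h) : ∃ c : ℝ, h = c • 1 := by
  obtain ⟨i, hi⟩ := Finite.exists_min h
  refine ⟨h i, sub_eq_zero.mp ?_⟩
  by_contra hne
  have hpos : 0 < (h - h i • (1 : ι → ℝ)) i :=
    pos_of_isIrreducible_of_mulVec_eq_smul hM (t := 1)
      (fun j => by simpa using hi j) hne
      (by rw [Matrix.mulVec_sub, Matrix.mulVec_smul, hM1, hh, one_smul]) i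
  simp at hpos

lemma exists_poisson_solution (hM : M.IsIrreducible) (hM1 : M.mulVec 1 = 1) {α : ι → ℝ}
    (hα1 : α ⬝ᵥ 1 = 1) (hαM : Matrix.vecMul α M = α) (d : ι → ℝ) :
    ∃ h : ι → ℝ, d + M.mulVec h - h = (α ⬝ᵥ d) • 1 := by
  classical
  set L : Matrix ι ι ℝ := 1 - M + Matrix.vecMulVec 1 α
  have hL : ∀ h, L.mulVec h = h - M.mulVec h + (α ⬝ᵥ h) • 1 := fun h => by
    rw [Matrix.add_mulVec, Matrix.sub_mulVec, Matrix.one_mulVec, Matrix.vecMulVec_mulVec,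
      op_smul_eq_smul]
  have hαL : ∀ h, α ⬝ᵥ L.mulVec h = α ⬝ᵥ h := fun h => by
    rw [hL, dotProduct_add, dotProduct_sub, Matrix.dotProduct_mulVec, hαM, sub_self, zero_add,
      dotProduct_smul, hα1, smul_eq_mul, mul_one]
  have hinj : Function.Injective L.mulVec := by
    refine (injective_iff_map_eq_zero L.mulVecLin).mpr fun h hh => ?_
    have hh' : L.mulVec h = 0 := hh
    have hαh : α ⬝ᵥ h = 0 := by rw [← hαL, hh', dotProduct_zero]
    rw [hL, hαh, zero_smul, add_zero] at hh'
    obtain ⟨c, rfl⟩ := eq_smul_one_of_harmonic hM hM1 (sub_eq_zero.mp hh').symm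
    rw [dotProduct_smul, hα1, smul_eq_mul, mul_one] at hαh
    rw [hαh, zero_smul]
  obtain ⟨h, hh⟩ := Matrix.mulVec_surjective_iff_isUnit.mpr
    (Matrix.mulVec_injective_iff_isUnit.mp hinj) d
  refine ⟨h, ?_⟩
  rw [← hh, hαL, hL]
  abel

lemma exists_nonpos_poisson_solution (hM : M.IsIrreducible) (hM1 : M.mulVec 1 = 1) {α : ι → ℝ}
    (hα1 : α ⬝ᵥ 1 = 1) (hαM : Matrix.vecMul α M = α) (d : ι → ℝ) :
    ∃ h : ι → ℝ, h ≤ 0 ∧ ∀ i, d i + M.mulVec h i - h i = α ⬝ᵥ d := by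
  obtain ⟨h, hh⟩ := exists_poisson_solution hM hM1 hα1 hαM d
  obtain ⟨i, hi⟩ := Finite.exists_max h
  have hshift : d + M.mulVec (h - h i • 1) - (h - h i • 1) = (α ⬝ᵥ d) • 1 := by
    rw [Matrix.mulVec_sub, Matrix.mulVec_smul, hM1, ← hh]
    abel
  exact ⟨h - h i • 1, fun j => by simpa using hi j, fun j => by simpa using congrFun hshift j⟩

end StochasticMatrix

/-! ### Generating functions of jumps -/

section ScalarSeries

lemma zpow_le_one_add_zpow {w z : ℝ} (hw : 1 ≤ w) (hwz : w ≤ z) (k : ℤ) : w ^ k ≤ 1 + z ^ k := by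
  rcases le_total 0 k with hk | hk
  · exact (zpow_le_zpow_left₀ hk (by linarith) hwz).trans (le_add_of_nonneg_left zero_le_one)
  · exact (zpow_le_one_of_nonpos₀ hw hk).trans
      (le_add_of_nonneg_right (zpow_nonneg (by linarith) k))

lemma summable_mul_zpow_of_le {κ : Type*} {a : κ → ℝ} {q : κ → ℤ} (ha : ∀ k, 0 ≤ a k)
    (hsum : Summable a) {w z : ℝ} (hw : 1 ≤ w) (hwz : w ≤ z)
    (hsumz : Summable fun k => a k * z ^ q k) : Summable fun k => a k * w ^ q k :=
  .of_nonneg_of_le (fun k => mul_nonneg (ha k) (zpow_nonneg (zero_le_one.trans hw) _))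
    (fun k => mul_le_mul_of_nonneg_left (zpow_le_one_add_zpow hw hwz _) (ha k))
    (by simpa only [mul_add, mul_one] using hsum.add hsumz)

lemma intCast_le_slope_zpow {w : ℝ} (hw : 1 < w) (k : ℤ) : (k : ℝ) ≤ slope (· ^ k) 1 w :=
  (convexOn_zpow k).le_slope_of_hasDerivAt (Set.mem_Ioi.mpr one_pos)
    (Set.mem_Ioi.mpr (one_pos.trans hw)) hw (by simpa using hasDerivAt_zpow k (1 : ℝ) (by simp))

lemma slope_zpow_le {w z : ℝ} (hw : 1 < w) (hwz : w ≤ z) (k : ℤ) :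
    slope (· ^ k) 1 w ≤ z ^ k / (z - 1) := by
  have hz : 1 < z := hw.trans_le hwz
  calc slope (· ^ k) 1 w ≤ slope (· ^ k) 1 z :=
        (convexOn_zpow k).slope_mono (Set.mem_Ioi.mpr one_pos)
          ⟨Set.mem_Ioi.mpr (one_pos.trans hw), hw.ne'⟩
          ⟨Set.mem_Ioi.mpr (one_pos.trans hz), hz.ne'⟩ hwz
    _ ≤ z ^ k / (z - 1) := by
      rw [slope_def_field, one_zpow]
      exact div_le_div_of_nonneg_right (sub_le_self _ zero_le_one) (sub_pos.mpr hz).le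

lemma abs_slope_zpow_le {w z : ℝ} (hw : 1 < w) (hwz : w ≤ z) (k : ℤ) :
    |slope (· ^ k) 1 w| ≤ |(k : ℝ)| + z ^ k / (z - 1) := by
  have hz : 0 < z := by linarith
  have hquot : 0 ≤ z ^ k / (z - 1) := div_nonneg (zpow_nonneg hz.le k) (by linarith)
  refine abs_le.mpr ⟨?_, ?_⟩
  · linarith [neg_abs_le (k : ℝ), intCast_le_slope_zpow hw k]
  · linarith [abs_nonneg (k : ℝ), slope_zpow_le hw hwz k]

lemma hasDerivWithinAt_tsum_mul_zpow {κ : Type*} {a : κ → ℝ} {q : κ → ℤ} (ha : ∀ k, 0 ≤ a k)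
    (hsum : Summable a) (hsumq : Summable fun k => a k * |(q k : ℝ)|) {z : ℝ} (hz : 1 < z)
    (hsumz : Summable fun k => a k * z ^ q k) :
    HasDerivWithinAt (fun w : ℝ => ∑' k, a k * w ^ q k) (∑' k, a k * (q k : ℝ)) (Set.Ioi 1) 1 := by
  rw [hasDerivWithinAt_iff_tendsto_slope' Set.self_notMem_Ioi]
  have hdom : Summable fun k => a k * |(q k : ℝ)| + a k * z ^ q k / (z - 1) :=
    hsumq.add (hsumz.div_const _)
  have hnear : ∀ᶠ w in 𝓝[>] (1 : ℝ), w ∈ Set.Ioo 1 z := Ioo_mem_nhdsGT hz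
  have hbound : ∀ w ∈ Set.Ioo 1 z, ∀ k,
      ‖a k * slope (· ^ q k) 1 w‖ ≤ a k * |(q k : ℝ)| + a k * z ^ q k / (z - 1) := by
    intro w hw k
    rw [norm_mul, Real.norm_of_nonneg (ha k), Real.norm_eq_abs, mul_div_assoc, ← mul_add]
    exact mul_le_mul_of_nonneg_left (abs_slope_zpow_le hw.1 hw.2.le (q k)) (ha k)
  have hlim : Tendsto (fun w : ℝ => ∑' k, a k * slope (· ^ q k) 1 w) (𝓝[>] 1)
      (𝓝 (∑' k, a k * (q k : ℝ))) := by
    refine tendsto_tsum_of_dominated_convergence hdom (fun k => Tendsto.const_mul _ ?_)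
      (hnear.mono hbound)
    rw [← hasDerivWithinAt_iff_tendsto_slope' Set.self_notMem_Ioi]
    simpa using (hasDerivAt_zpow (q k) (1 : ℝ) (by simp)).hasDerivWithinAt
  refine hlim.congr' (hnear.mono fun w hw => ?_)
  have hsumw := summable_mul_zpow_of_le ha hsum hw.1.le hw.2.le hsumz
  simp only [slope_def_field, one_zpow, mul_one]
  rw [← hsumw.tsum_sub hsum, ← tsum_div_const]
  exact tsum_congr fun k => by ring

lemma summable_mul_zpow_of_lt_radius {a : ℤ → ℝ} (ha : ∀ k, 0 ≤ a k) (hsum : Summable a) {z : ℝ}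
    (hz : 1 ≤ z) (hrad : ENNReal.ofReal z < radius fun k : ℕ => a (k + 1)) :
    Summable fun k => a k * z ^ k := by
  have hz₀ : 0 ≤ z := zero_le_one.trans hz
  obtain ⟨ρ, hρ⟩ := lt_iSup_iff.mp hrad
  obtain ⟨hsumρ, hlt⟩ := lt_iSup_iff.mp hρ
  have hzρ : z ≤ ρ := ((ENNReal.ofReal_lt_iff_lt_toReal hz₀ ENNReal.coe_ne_top).mp hlt).le
  refine Summable.of_nat_of_neg ((summable_nat_add_iff 1).mp ?_) ?_
  · refine .of_nonneg_of_le (fun n => mul_nonneg (ha _) (zpow_nonneg hz₀ _)) (fun n => ?_)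
      (hsumρ.mul_left z)
    calc a ((n + 1 : ℕ) : ℤ) * z ^ ((n + 1 : ℕ) : ℤ) = z * (a (n + 1) * z ^ n) := by
          rw [zpow_natCast, pow_succ]
          push_cast
          ring
      _ ≤ z * (a (n + 1) * ρ ^ n) := by
        gcongr
        exact ha _
  · refine .of_nonneg_of_le (fun n => mul_nonneg (ha _) (zpow_nonneg hz₀ _))
      (fun n => mul_le_of_le_one_right (ha _) (zpow_le_one_of_nonpos₀ hz (by simp)))
      (hsum.comp_injective (i := fun n : ℕ => -(n : ℤ)) fun _ _ h => by simpa using h)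

lemma summable_mul_max_zero_of_zpow {a : ℤ → ℝ} (ha : ∀ k, 0 ≤ a k) {z : ℝ} (hz : 1 < z)
    (hsumz : Summable fun k => a k * z ^ k) : Summable fun k : ℤ => a k * max (k : ℝ) 0 := by
  refine .of_nonneg_of_le (fun k => mul_nonneg (ha k) (le_max_right _ _)) (fun k => ?_)
    (hsumz.div_const (z - 1))
  rw [mul_div_assoc]
  refine mul_le_mul_of_nonneg_left (max_le ?_ ?_) (ha k)
  · exact (intCast_le_slope_zpow hz k).trans (slope_zpow_le hz le_rfl k)
  · exact div_nonneg (zpow_nonneg (by linarith) k) (by linarith)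

end ScalarSeries

section TruncatedJump

/-- The jump size `k` cut off below at `-K`, so that jumps downwards are bounded. -/
def truncJump (K : ℕ) (k : ℤ) : ℤ := max k (-K)

lemma le_truncJump (K : ℕ) (k : ℤ) : k ≤ truncJump K k := le_max_left _ _

lemma truncJump_of_neg_le {K : ℕ} {k : ℤ} (h : -K ≤ k) : truncJump K k = k := max_eq_left h

lemma truncJump_le_max_zero (K : ℕ) (k : ℤ) : truncJump K k ≤ max k 0 :=
  max_le_max_left k (by simp)

lemma abs_truncJump_le_abs (K : ℕ) (k : ℤ) : |truncJump K k| ≤ |k| := by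
  unfold truncJump
  grind

lemma abs_truncJump_le_max_zero_add (K : ℕ) (k : ℤ) : |truncJump K k| ≤ max k 0 + K := by
  unfold truncJump
  grind

lemma zpow_truncJump_le_one_add {z : ℝ} (hz : 1 ≤ z) (K : ℕ) (k : ℤ) :
    z ^ truncJump K k ≤ 1 + z ^ k := by
  rcases max_choice k (-K : ℤ) with h | h <;> rw [truncJump, h]
  · linarith
  · linarith [zpow_le_one_of_nonpos₀ hz (show (-K : ℤ) ≤ 0 by simp),
      zpow_nonneg (zero_le_one.trans hz) k]

variable {a : ℤ → ℝ}

lemma summable_mul_abs_truncJump (ha : ∀ k, 0 ≤ a k) (hsum : Summable a)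
    (hpos : Summable fun k : ℤ => a k * max (k : ℝ) 0) (K : ℕ) :
    Summable fun k => a k * |(truncJump K k : ℝ)| := by
  refine .of_nonneg_of_le (fun k => mul_nonneg (ha k) (abs_nonneg _))
    (fun k => mul_le_mul_of_nonneg_left ?_ (ha k))
    (show Summable fun k : ℤ => a k * (max (k : ℝ) 0 + K) by
      simpa only [mul_add] using hpos.add (hsum.mul_right (K : ℝ)))
  exact_mod_cast abs_truncJump_le_max_zero_add K k

lemma summable_mul_truncJump (ha : ∀ k, 0 ≤ a k) (hsum : Summable a)
    (hpos : Summable fun k : ℤ => a k * max (k : ℝ) 0) (K : ℕ) :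
    Summable fun k => a k * (truncJump K k : ℝ) :=
  (summable_mul_abs_truncJump ha hsum hpos K).of_norm_bounded fun k => by
    rw [norm_mul, Real.norm_of_nonneg (ha k), Real.norm_eq_abs]

lemma summable_mul_zpow_truncJump (ha : ∀ k, 0 ≤ a k) (hsum : Summable a) {z : ℝ} (hz : 1 ≤ z)
    (hsumz : Summable fun k => a k * z ^ k) (K : ℕ) :
    Summable fun k => a k * z ^ truncJump K k :=
  .of_nonneg_of_le (fun k => mul_nonneg (ha k) (zpow_nonneg (zero_le_one.trans hz) _))
    (fun k => mul_le_mul_of_nonneg_left (zpow_truncJump_le_one_add hz K k) (ha k))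
    (by simpa only [mul_add, mul_one] using hsum.add hsumz)

lemma summable_mul_abs_of_truncated_mean_nonneg (ha : ∀ k, 0 ≤ a k) (hsum : Summable a)
    (hpos : Summable fun k : ℤ => a k * max (k : ℝ) 0)
    (hmean : ∀ K, 0 ≤ ∑' k, a k * (truncJump K k : ℝ)) :
    Summable fun k : ℤ => a k * |(k : ℝ)| := by
  have hneg : Summable fun k : ℤ => a k * (max (k : ℝ) 0 - k) := by
    refine summable_of_sum_le (c := ∑' k : ℤ, a k * max (k : ℝ) 0)
      (fun k => mul_nonneg (ha k) (sub_nonneg.mpr (le_max_left _ _))) fun u => ?_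
    obtain ⟨K, hK⟩ : ∃ K : ℕ, ∀ k ∈ u, truncJump K k = k :=
      ⟨u.sup Int.natAbs, fun k hk => truncJump_of_neg_le (by
        have := Finset.le_sup (f := Int.natAbs) hk
        omega)⟩
    have hsumK := summable_mul_truncJump ha hsum hpos K
    have hdiff : Summable fun k : ℤ => a k * (max (k : ℝ) 0 - truncJump K k) := by
      simpa only [mul_sub] using hpos.sub hsumK
    calc ∑ k ∈ u, a k * (max (k : ℝ) 0 - k)
        = ∑ k ∈ u, a k * (max (k : ℝ) 0 - truncJump K k) :=
          Finset.sum_congr rfl fun k hk => by rw [hK k hk]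
      _ ≤ ∑' k : ℤ, a k * (max (k : ℝ) 0 - truncJump K k) :=
        hdiff.sum_le_tsum u fun k _ => mul_nonneg (ha k)
          (sub_nonneg.mpr (mod_cast truncJump_le_max_zero K k))
      _ = ∑' k : ℤ, a k * max (k : ℝ) 0 - ∑' k, a k * (truncJump K k : ℝ) := by
        simp only [mul_sub, hpos.tsum_sub hsumK]
      _ ≤ ∑' k : ℤ, a k * max (k : ℝ) 0 := sub_le_self _ (hmean K)
  refine (hpos.add hneg).congr fun k => ?_
  rw [← mul_add]
  congr 1
  rcases le_total (k : ℝ) 0 with h | h <;> simp [h, abs_of_nonneg, abs_of_nonpos]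

lemma tendsto_tsum_mul_truncJump (ha : ∀ k, 0 ≤ a k)
    (habs : Summable fun k : ℤ => a k * |(k : ℝ)|) :
    Tendsto (fun K => ∑' k, a k * (truncJump K k : ℝ)) atTop (𝓝 (∑' k : ℤ, a k * (k : ℝ))) := by
  refine tendsto_tsum_of_dominated_convergence habs (fun k => ?_) (.of_forall fun K k => ?_)
  · refine tendsto_const_nhds.congr' ?_
    filter_upwards [eventually_ge_atTop k.natAbs] with K hK
    rw [truncJump_of_neg_le (by omega)]
  · rw [norm_mul, Real.norm_of_nonneg (ha k), Real.norm_eq_abs]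
    exact mul_le_mul_of_nonneg_left (mod_cast abs_truncJump_le_abs K k) (ha k)

end TruncatedJump

section GeneratingFunction

variable {m : ℕ} {A : ℤ → Matrix (Fin m) (Fin m) ℝ}

/-- The generating function `∑ₖ Aₖ w ^ q(k)` of the jumps `k` re-sized to `q k`; the choice
`q = id` is `AstarR`. -/
noncomputable def jumpGF (A : ℤ → Matrix (Fin m) (Fin m) ℝ) (q : ℤ → ℤ) (w : ℝ) :
    Matrix (Fin m) (Fin m) ℝ :=
  Matrix.of fun r s => ∑' k, A k r s * w ^ q k

/-- The mean size `∑ₖ q(k) ∑ₛ Aₖ(r, s)` of a jump from phase `r` when the jump `k` is re-sized to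
`q k`. -/
noncomputable def meanJump (A : ℤ → Matrix (Fin m) (Fin m) ℝ) (q : ℤ → ℤ) (r : Fin m) : ℝ :=
  ∑ s, ∑' k, A k r s * (q k : ℝ)

lemma summable_of_phaseStochastic (hphase : PhaseStochastic A) (r s : Fin m) :
    Summable fun k => A k r s :=
  (hphase r).summable.comp_injective (i := fun k : ℤ => (k, s)) fun _ _ h => congrArg Prod.fst h

lemma matA_mulVec_one (hphase : PhaseStochastic A) : (matA A).mulVec 1 = 1 := by
  ext r
  have hswap : HasSum (fun p : Fin m × ℤ => A p.2 r p.1) 1 :=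
    (Equiv.prodComm (Fin m) ℤ).hasSum_iff.mpr (hphase r)
  have hrow : HasSum (fun s => matA A r s) 1 :=
    hswap.prod_fiberwise fun s => (summable_of_phaseStochastic hphase r s).hasSum
  rw [Matrix.mulVec, dotProduct_one, Pi.one_apply]
  exact (hasSum_fintype _).unique hrow

lemma matA_nonneg (hA0 : ∀ k r s, 0 ≤ A k r s) (r s : Fin m) : 0 ≤ matA A r s :=
  tsum_nonneg fun k => hA0 k r s

lemma summable_AstarR (hA0 : ∀ k r s, 0 ≤ A k r s) (hphase : PhaseStochastic A) {z : ℝ}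
    (hz : 1 ≤ z) (hzφ : ENNReal.ofReal z < phiA A) (r s : Fin m) :
    Summable fun k => A k r s * z ^ k := by
  have hrad : ENNReal.ofReal z < radius fun k : ℕ => A (k + 1) r s :=
    hzφ.trans_le (iInf₂_le (f := fun r s => radius fun k : ℕ => A (k + 1) r s) r s)
  exact summable_mul_zpow_of_lt_radius (fun k => hA0 k r s)
    (summable_of_phaseStochastic hphase r s) hz hrad

lemma isIrreducible_AstarR (hA0 : ∀ k r s, 0 ≤ A k r s) (hirr : (matA A).IsIrreducible) {z : ℝ}
    (hz : 0 < z) (hsumz : ∀ r s, Summable fun k => A k r s * z ^ k) :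
    (AstarR A z).IsIrreducible := by
  have hterm : ∀ r s k, 0 ≤ A k r s * z ^ k := fun r s k =>
    mul_nonneg (hA0 k r s) (zpow_nonneg hz.le k)
  refine isIrreducible_of_forall_pos_imp_pos hirr (fun r s => tsum_nonneg (hterm r s))
    fun r s hrs => ?_
  obtain ⟨k, hk⟩ : ∃ k, A k r s ≠ 0 := by
    by_contra! hzero
    simp [matA, hzero] at hrs
  exact (hsumz r s).tsum_pos (hterm r s) k
    (mul_pos ((hA0 k r s).lt_of_ne hk.symm) (zpow_pos hz k))

lemma continuousOn_AstarR (hA0 : ∀ k r s, 0 ≤ A k r s) (hsum : ∀ r s, Summable fun k => A k r s)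
    {z : ℝ} (hsumz : ∀ r s, Summable fun k => A k r s * z ^ k) :
    ContinuousOn (AstarR A) (Set.Icc 1 z) := by
  refine continuousOn_pi.mpr fun r => continuousOn_pi.mpr fun s => ?_
  refine continuousOn_tsum (u := fun k => A k r s * (1 + z ^ k)) (fun k => ?_) ?_ fun k w hw => ?_
  · exact continuousOn_const.mul
      (continuousOn_id.zpow₀ k fun w hw => Or.inl (one_pos.trans_le hw.1).ne')
  · simpa only [mul_add, mul_one] using (hsum r s).add (hsumz r s)
  · have hwk : 0 ≤ w ^ k := zpow_nonneg (zero_le_one.trans hw.1) k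
    rw [Real.norm_of_nonneg (mul_nonneg (hA0 k r s) hwk)]
    exact mul_le_mul_of_nonneg_left (zpow_le_one_add_zpow hw.1 hw.2 k) (hA0 k r s)

lemma AstarR_le_jumpGF (hA0 : ∀ k r s, 0 ≤ A k r s) {q : ℤ → ℤ} (hq : ∀ k, k ≤ q k) {w : ℝ}
    (hw : 1 ≤ w) (hsumw : ∀ r s, Summable fun k => A k r s * w ^ k)
    (hsumq : ∀ r s, Summable fun k => A k r s * w ^ q k) (r s : Fin m) :
    AstarR A w r s ≤ jumpGF A q w r s :=
  (hsumw r s).tsum_le_tsum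
    (fun k => mul_le_mul_of_nonneg_left (zpow_le_zpow_right₀ hw (hq k)) (hA0 k r s)) (hsumq r s)

lemma hasDerivWithinAt_jumpGF_mulVec (hA0 : ∀ k r s, 0 ≤ A k r s)
    (hsum : ∀ r s, Summable fun k => A k r s) {q : ℤ → ℤ}
    (hsumq : ∀ r s, Summable fun k => A k r s * |(q k : ℝ)|) {z : ℝ} (hz : 1 < z)
    (hsumz : ∀ r s, Summable fun k => A k r s * z ^ q k) (h : Fin m → ℝ) (r : Fin m) :
    HasDerivWithinAt (fun w : ℝ => (jumpGF A q w).mulVec (1 + (w - 1) • h) r)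
      (meanJump A q r + (matA A).mulVec h r) (Set.Ioi 1) 1 := by
  have hentry : ∀ s, HasDerivWithinAt (fun w : ℝ => jumpGF A q w r s * (1 + (w - 1) * h s))
      ((∑' k, A k r s * (q k : ℝ)) + matA A r s * h s) (Set.Ioi 1) 1 := by
    intro s
    have hGF : HasDerivWithinAt (fun w : ℝ => jumpGF A q w r s) (∑' k, A k r s * (q k : ℝ))
        (Set.Ioi 1) 1 :=
      hasDerivWithinAt_tsum_mul_zpow (fun k => hA0 k r s) (hsum r s) (hsumq r s) hz (hsumz r s)
    have haffine : HasDerivWithinAt (fun w : ℝ => 1 + (w - 1) * h s) (h s) (Set.Ioi 1) 1 := by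
      simpa using ((((hasDerivAt_id (1 : ℝ)).sub_const 1).mul_const (h s)).const_add
        1).hasDerivWithinAt
    have hone : jumpGF A q 1 r s = matA A r s := by simp [jumpGF, matA]
    simpa [hone] using hGF.fun_mul haffine
  simpa only [Matrix.mulVec, dotProduct, Pi.add_apply, Pi.one_apply, Pi.smul_apply, smul_eq_mul,
    meanJump, Finset.sum_add_distrib] using HasDerivWithinAt.fun_sum fun s _ => hentry s

lemma eventually_jumpGF_mulVec_lt (hA0 : ∀ k r s, 0 ≤ A k r s) (hphase : PhaseStochastic A)
    {q : ℤ → ℤ} (hsumq : ∀ r s, Summable fun k => A k r s * |(q k : ℝ)|) {z : ℝ} (hz : 1 < z)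
    (hsumz : ∀ r s, Summable fun k => A k r s * z ^ q k) {h : Fin m → ℝ}
    (hneg : ∀ r, meanJump A q r + (matA A).mulVec h r - h r < 0) (r : Fin m) :
    ∀ᶠ w in 𝓝[>] (1 : ℝ),
      (jumpGF A q w).mulVec (1 + (w - 1) • h) r < (1 + (w - 1) • h) r := by
  have hderiv := (hasDerivWithinAt_jumpGF_mulVec hA0
    (summable_of_phaseStochastic hphase) hsumq hz hsumz h r).sub
    (((hasDerivAt_id (1 : ℝ)).sub_const 1).mul_const (h r)).hasDerivWithinAt
  have hone : (jumpGF A q 1).mulVec 1 r = 1 := by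
    have hmat : jumpGF A q 1 = matA A := by ext; simp [jumpGF, matA]
    rw [hmat, matA_mulVec_one hphase, Pi.one_apply]
  filter_upwards [hderiv.limsup_slope_le' Set.self_notMem_Ioi
      (by rw [one_mul]; exact hneg r),
    self_mem_nhdsWithin] with w hslope hw
  rw [slope_def_field, div_lt_iff₀ (sub_pos.mpr hw), zero_mul] at hslope
  simp only [id_eq, Pi.sub_apply, sub_self, zero_smul, add_zero, hone, zero_mul, sub_zero,
    sub_neg, Pi.add_apply, Pi.one_apply, Pi.smul_apply, smul_eq_mul] at hslope ⊢
  linarith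

lemma eventually_one_add_smul_pos (h : Fin m → ℝ) :
    ∀ᶠ w in 𝓝[>] (1 : ℝ), ∀ r, 0 < (1 + (w - 1) • h) r := by
  refine eventually_all.mpr fun r => nhdsWithin_le_nhds ?_
  have hcont : ContinuousAt (fun w : ℝ => (1 + (w - 1) • h) r) 1 := by
    simp only [Pi.add_apply, Pi.smul_apply]
    fun_prop
  exact hcont.eventually_const_lt (by simp)

lemma exists_chi_AstarR_lt_one [NeZero m] (hA0 : ∀ k r s, 0 ≤ A k r s)
    (hphase : PhaseStochastic A) (hirr : (matA A).IsIrreducible) {z : ℝ} (hz : 1 < z)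
    (hsumz : ∀ r s, Summable fun k => A k r s * z ^ k) {K : ℕ} {h : Fin m → ℝ}
    (hneg : ∀ r, meanJump A (truncJump K) r + (matA A).mulVec h r - h r < 0) :
    ∃ w ∈ Set.Ioo 1 z, chi (AstarR A w) < 1 := by
  have hsum := summable_of_phaseStochastic hphase
  have hlt := eventually_all.mpr fun r => eventually_jumpGF_mulVec_lt hA0 hphase
    (fun r s => summable_mul_abs_truncJump (fun k => hA0 k r s) (hsum r s)
      (summable_mul_max_zero_of_zpow (fun k => hA0 k r s) hz (hsumz r s)) K) hz
    (fun r s => summable_mul_zpow_truncJump (fun k => hA0 k r s) (hsum r s) hz.le (hsumz r s) K)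
    hneg r
  have hnear : ∀ᶠ w in 𝓝[>] (1 : ℝ), w ∈ Set.Ioo 1 z := Ioo_mem_nhdsGT hz
  obtain ⟨w, hw, hV, hltw⟩ := (hnear.and ((eventually_one_add_smul_pos h).and hlt)).exists
  have hsumw : ∀ r s, Summable fun k => A k r s * w ^ k := fun r s =>
    summable_mul_zpow_of_le (fun k => hA0 k r s) (hsum r s) hw.1.le hw.2.le (hsumz r s)
  have hsumwK : ∀ r s, Summable fun k => A k r s * w ^ truncJump K k := fun r s =>
    summable_mul_zpow_truncJump (fun k => hA0 k r s) (hsum r s) hw.1.le (hsumw r s) K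
  refine ⟨w, hw, chi_lt_of_mulVec_lt
    (isIrreducible_AstarR hA0 hirr (one_pos.trans hw.1) hsumw) hV fun r => ?_⟩
  calc (AstarR A w).mulVec (1 + (w - 1) • h) r
      ≤ (jumpGF A (truncJump K) w).mulVec (1 + (w - 1) • h) r :=
        dotProduct_le_dotProduct_of_nonneg_right
          (fun s => AstarR_le_jumpGF hA0 (le_truncJump K) hw.1.le hsumw hsumwK r s)
          (fun s => (hV s).le)
    _ < 1 * (1 + (w - 1) • h) r := by simpa only [one_mul] using hltw r

end GeneratingFunction

section JumpLaw

variable {m : ℕ} {A : ℤ → Matrix (Fin m) (Fin m) ℝ} {α : Fin m → ℝ}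

/-- The weights `k ↦ ∑ᵣₛ α(r) Aₖ(r, s)`: the law of a jump whose starting phase has law `α`. -/
def jumpLaw (A : ℤ → Matrix (Fin m) (Fin m) ℝ) (α : Fin m → ℝ) (k : ℤ) : ℝ :=
  ∑ r, ∑ s, α r * A k r s

lemma jumpLaw_nonneg (hA0 : ∀ k r s, 0 ≤ A k r s) (hα : 0 ≤ α) (k : ℤ) : 0 ≤ jumpLaw A α k :=
  Finset.sum_nonneg fun r _ => Finset.sum_nonneg fun s _ => mul_nonneg (hα r) (hA0 k r s)

lemma mul_le_jumpLaw (hA0 : ∀ k r s, 0 ≤ A k r s) (hα : 0 ≤ α) (k : ℤ) (r s : Fin m) :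
    α r * A k r s ≤ jumpLaw A α k := by
  have hterm : ∀ r s, 0 ≤ α r * A k r s := fun r s => mul_nonneg (hα r) (hA0 k r s)
  calc α r * A k r s ≤ ∑ s, α r * A k r s :=
        Finset.single_le_sum (fun s _ => hterm r s) (Finset.mem_univ s)
    _ ≤ jumpLaw A α k :=
        Finset.single_le_sum (f := fun r => ∑ s, α r * A k r s)
          (fun r _ => Finset.sum_nonneg fun s _ => hterm r s) (Finset.mem_univ r)

lemma hasSum_jumpLaw_mul (α : Fin m → ℝ) {b : ℤ → ℝ}
    (hb : ∀ r s, Summable fun k => A k r s * b k) :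
    HasSum (fun k => jumpLaw A α k * b k) (∑ r, α r * ∑ s, ∑' k, A k r s * b k) := by
  simp only [jumpLaw, Finset.sum_mul, Finset.mul_sum, mul_assoc]
  exact hasSum_sum fun r _ => hasSum_sum fun s _ => (hb r s).hasSum.mul_left _

lemma summable_mul_abs_of_truncated_drift_nonneg (hA0 : ∀ k r s, 0 ≤ A k r s)
    (hsum : ∀ r s, Summable fun k => A k r s)
    (hpos : ∀ r s, Summable fun k : ℤ => A k r s * max (k : ℝ) 0) (hα : ∀ r, 0 < α r)
    (hdrift : ∀ K, 0 ≤ α ⬝ᵥ meanJump A (truncJump K)) (r s : Fin m) :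
    Summable fun k : ℤ => A k r s * |(k : ℝ)| := by
  have hα₀ : 0 ≤ α := fun r => (hα r).le
  have hsumK : ∀ K r s, Summable fun k => A k r s * (truncJump K k : ℝ) := fun K r s =>
    summable_mul_truncJump (fun k => hA0 k r s) (hsum r s) (hpos r s) K
  have habs : Summable fun k : ℤ => jumpLaw A α k * |(k : ℝ)| := by
    refine summable_mul_abs_of_truncated_mean_nonneg (jumpLaw_nonneg hA0 hα₀) ?_
      (hasSum_jumpLaw_mul α hpos).summable fun K => ?_
    · simpa using (hasSum_jumpLaw_mul α (b := 1) (by simpa using hsum)).summable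
    · exact (hasSum_jumpLaw_mul α (hsumK K)).tsum_eq.symm ▸ hdrift K
  refine (habs.div_const (α r)).of_nonneg_of_le
    (fun k => mul_nonneg (hA0 k r s) (abs_nonneg _)) fun k => ?_
  rw [le_div_iff₀' (hα r), ← mul_assoc]
  exact mul_le_mul_of_nonneg_right (mul_le_jumpLaw hA0 hα₀ k r s) (abs_nonneg _)

lemma drift_nonneg_of_truncated_drift_nonneg (hA0 : ∀ k r s, 0 ≤ A k r s) (hα : 0 ≤ α)
    (habs : ∀ r s, Summable fun k : ℤ => A k r s * |(k : ℝ)|)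
    (hdrift : ∀ K, 0 ≤ α ⬝ᵥ meanJump A (truncJump K)) : 0 ≤ α ⬝ᵥ meanJump A id := by
  have hsumq : ∀ q : ℤ → ℤ, (∀ k, |q k| ≤ |k|) →
      ∀ r s, Summable fun k => A k r s * (q k : ℝ) := fun q hq r s =>
    (habs r s).of_norm_bounded fun k => by
      rw [norm_mul, Real.norm_of_nonneg (hA0 k r s), Real.norm_eq_abs]
      exact mul_le_mul_of_nonneg_left (mod_cast hq k) (hA0 k r s)
  have hlim := tendsto_tsum_mul_truncJump (jumpLaw_nonneg hA0 hα)
    (hasSum_jumpLaw_mul α habs).summable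
  have hlimit : α ⬝ᵥ meanJump A id = ∑' k : ℤ, jumpLaw A α k * (k : ℝ) :=
    (hasSum_jumpLaw_mul α (hsumq id fun _ => le_rfl)).tsum_eq.symm
  rw [hlimit]
  refine ge_of_tendsto' hlim fun K => ?_
  exact (hasSum_jumpLaw_mul α (hsumq _ (abs_truncJump_le_abs K))).tsum_eq.symm ▸ hdrift K

end JumpLaw

section Omega

variable {m : ℕ} {A : ℤ → Matrix (Fin m) (Fin m) ℝ}

lemma AstarC_ofReal (A : ℤ → Matrix (Fin m) (Fin m) ℝ) (w : ℝ) :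
    AstarC A w = Complex.ofRealHom.mapMatrix (AstarR A w) := by
  ext r s
  simp [AstarC, AstarR, Complex.ofReal_tsum]

lemma det_one_sub_AstarC_eq_zero {w : ℝ} {v : Fin m → ℝ} (hv : v ≠ 0)
    (hfix : (AstarR A w).mulVec v = v) : (1 - AstarC A w).det = 0 := by
  have hdet : (1 - AstarR A w).det = 0 := Matrix.exists_mulVec_eq_zero_iff.mp
    ⟨v, hv, by rw [Matrix.sub_mulVec, hfix, Matrix.one_mulVec, sub_self]⟩
  rw [AstarC_ofReal, ← map_one Complex.ofRealHom.mapMatrix, ← map_sub, ← RingHom.map_det, hdet,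
    map_zero]

lemma chi_AstarR_ne_one [NeZero m] {w : ℝ} (hw : 1 < w)
    (hwη : ENNReal.ofReal w < min (phiA A) (eta A)) (hirr : (AstarR A w).IsIrreducible) :
    chi (AstarR A w) ≠ 1 := by
  intro hchi
  obtain ⟨v, hv, hfix⟩ := exists_pos_mulVec_eq_chi_smul hirr
  rw [hchi, one_smul] at hfix
  have hnorm : ‖(w : ℂ)‖ = w := by
    rw [Complex.norm_real, Real.norm_of_nonneg (zero_le_one.trans hw.le)]
  have hmem : (w : ℂ) ∈ Omega A :=
    ⟨hnorm.symm ▸ hw, hnorm.symm ▸ hwη.trans_le (min_le_left _ _),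
      det_one_sub_AstarC_eq_zero (Function.ne_iff.mpr ⟨0, (hv 0).ne'⟩) hfix⟩
  have hη : eta A ≤ ENNReal.ofReal w := sInf_le ⟨w, hmem, by simp only [hnorm]⟩
  exact (hwη.trans_le (min_le_right _ _)).not_ge hη

lemma chi_AstarR_lt_one_of_exists [NeZero m] (hA0 : ∀ k r s, 0 ≤ A k r s)
    (hphase : PhaseStochastic A) (hirr : (matA A).IsIrreducible) {z : ℝ}
    (hz : ENNReal.ofReal z < min (phiA A) (eta A))
    (hlt : ∃ w ∈ Set.Ioo 1 z, chi (AstarR A w) < 1) : chi (AstarR A z) < 1 := by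
  obtain ⟨w, hw, hchi⟩ := hlt
  have hsub : Set.Icc w z ⊆ Set.Icc 1 z := Set.Icc_subset_Icc_left hw.1.le
  have hsum := summable_of_phaseStochastic hphase
  have hzφ := hz.trans_le (min_le_left _ _)
  have hsumz := summable_AstarR hA0 hphase (hw.1.trans hw.2).le hzφ
  have hirrx : ∀ x ∈ Set.Icc w z, (AstarR A x).IsIrreducible := fun x hx =>
    isIrreducible_AstarR hA0 hirr (one_pos.trans_le (hsub hx).1) fun r s =>
      summable_mul_zpow_of_le (fun k => hA0 k r s) (hsum r s) (hsub hx).1 hx.2 (hsumz r s)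
  have hcont : ContinuousOn (fun x => chi (AstarR A x)) (Set.Icc w z) :=
    continuousOn_chi ((continuousOn_AstarR hA0 hsum hsumz).mono hsub) hirrx
  by_contra! hge
  obtain ⟨x, hx, hx1⟩ := intermediate_value_Icc hw.2.le hcont ⟨hchi.le, hge⟩
  exact chi_AstarR_ne_one (hw.1.trans_le hx.1)
    ((ENNReal.ofReal_le_ofReal hx.2).trans_lt hz) (hirrx x hx) hx1

end Omega

/-! ### Drift under a stationary law -/

section StationaryKernel

variable {ι : Type*} {Q : ι → ι → ℝ} {π : ι → ℝ}

lemma summable_mul_kernel (hQ : ∀ x y, 0 ≤ Q x y) (hQ1 : ∀ x, HasSum (Q x) 1)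
    (hπ : ∀ x, 0 ≤ π x) (hπs : Summable π) : Summable fun q : ι × ι => π q.1 * Q q.1 q.2 := by
  refine (summable_prod_of_nonneg fun q => mul_nonneg (hπ q.1) (hQ q.1 q.2)).mpr
    ⟨fun x => (hQ1 x).summable.mul_left (π x), ?_⟩
  simpa only [tsum_mul_left, (hQ1 _).tsum_eq, mul_one] using hπs

lemma hasSum_mul_kernel_mul_sub_eq_zero (hQ : ∀ x y, 0 ≤ Q x y) (hQ1 : ∀ x, HasSum (Q x) 1)
    (hπ : ∀ x, 0 ≤ π x) (hπs : Summable π) (hst : ∀ y, HasSum (fun x => π x * Q x y) (π y))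
    {g : ι → ℝ} {N : ℝ} (hg : ∀ x, |g x| ≤ N) :
    HasSum (fun q : ι × ι => π q.1 * Q q.1 q.2 * (g q.2 - g q.1)) 0 := by
  have hsummable : ∀ b : ι × ι → ℝ, (∀ q, |b q| ≤ N) →
      Summable fun q : ι × ι => π q.1 * Q q.1 q.2 * b q := fun b hb =>
    ((summable_mul_kernel hQ hQ1 hπ hπs).mul_right N).of_norm_bounded fun q => by
      have hpair := mul_nonneg (hπ q.1) (hQ q.1 q.2)
      rw [norm_mul, Real.norm_of_nonneg hpair]
      exact mul_le_mul_of_nonneg_left (hb q) hpair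
  have hsource := (hsummable (fun q => g q.1) fun q => hg q.1).hasSum
  have htarget := (hsummable (fun q => g q.2) fun q => hg q.2).hasSum
  have hsource' : HasSum (fun x => π x * g x) _ := hsource.prod_fiberwise fun x => by
    simpa only [mul_one, mul_right_comm] using (hQ1 x).mul_left (π x * g x)
  have htarget' : HasSum (fun y => π y * g y) _ :=
    ((Equiv.prodComm ι ι).hasSum_iff.mpr htarget).prod_fiberwise fun y => (hst y).mul_right (g y)
  simpa only [mul_sub, htarget'.unique hsource', sub_self] using htarget.sub hsource

lemma summable_mul_kernel_mul_of_bounded (hQ : ∀ x y, 0 ≤ Q x y) (hπ : ∀ x, 0 ≤ π x)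
    (hπs : Summable π) {b : ι → ι → ℝ} (hb : ∀ x y, 0 ≤ b x y)
    (hQb : ∀ x, π x ≠ 0 → Summable fun y => Q x y * b x y) {C : ℝ}
    (hC : ∀ x, π x ≠ 0 → ∑' y, Q x y * b x y ≤ C) :
    Summable fun q : ι × ι => π q.1 * Q q.1 q.2 * b q.1 q.2 := by
  have hQb0 : ∀ x y, 0 ≤ Q x y * b x y := fun x y => mul_nonneg (hQ x y) (hb x y)
  simp only [mul_assoc]
  refine (summable_prod_of_nonneg fun q => mul_nonneg (hπ q.1) (hQb0 q.1 q.2)).mpr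
    ⟨fun x => ?_, ?_⟩
  · rcases eq_or_ne (π x) 0 with h | h
    · simpa only [h, zero_mul] using summable_zero
    · exact (hQb x h).mul_left (π x)
  · simp only [tsum_mul_left]
    refine (hπs.mul_right C).of_nonneg_of_le
      (fun x => mul_nonneg (hπ x) (tsum_nonneg (hQb0 x))) fun x => ?_
    rcases eq_or_ne (π x) 0 with h | h
    · simp only [h, zero_mul, le_refl]
    · exact mul_le_mul_of_nonneg_left (hC x h) (hπ x)

lemma tsum_mul_kernel_mul_nonneg (hπ : ∀ x, 0 ≤ π x) {b : ι → ι → ℝ}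
    (hsum : Summable fun q : ι × ι => π q.1 * Q q.1 q.2 * b q.1 q.2)
    (hQb : ∀ x, π x ≠ 0 → 0 ≤ ∑' y, Q x y * b x y) :
    0 ≤ ∑' q : ι × ι, π q.1 * Q q.1 q.2 * b q.1 q.2 := by
  rw [hsum.tsum_prod]
  refine tsum_nonneg fun x => ?_
  simp only [mul_assoc, tsum_mul_left]
  rcases eq_or_ne (π x) 0 with h | h
  · simp only [h, zero_mul, le_refl]
  · exact mul_nonneg (hπ x) (hQb x h)

lemma tendsto_tsum_mul_min_sub_min {p a b : ι → ℝ} (hp : ∀ q, 0 ≤ p q)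
    (habs : Summable fun q => p q * |a q - b q|) :
    Tendsto (fun N : ℕ => ∑' q, p q * (min (a q) N - min (b q) N)) atTop
      (𝓝 (∑' q, p q * (a q - b q))) := by
  have hmin : ∀ c : ℝ, Tendsto (fun N : ℕ => min c N) atTop (𝓝 c) := fun c =>
    tendsto_const_nhds.congr' <| (tendsto_natCast_atTop_atTop.eventually_ge_atTop c).mono
      fun N hN => (min_eq_left hN).symm
  refine tendsto_tsum_of_dominated_convergence habs
    (fun q => ((hmin (a q)).sub (hmin (b q))).const_mul (p q)) (.of_forall fun N q => ?_)
  rw [norm_mul, Real.norm_of_nonneg (hp q), Real.norm_eq_abs]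
  exact mul_le_mul_of_nonneg_left
    (by simpa using abs_min_sub_min_le_max (a q) N (b q) N) (hp q)

lemma exists_nonneg_tendsto_truncated_drift (hQ : ∀ x y, 0 ≤ Q x y) (hπ : ∀ x, 0 ≤ π x)
    (hπs : Summable π) {f : ι → ℝ} {C : ℝ}
    (habs : ∀ x, π x ≠ 0 → Summable fun y => Q x y * |f y - f x|)
    (hC : ∀ x, π x ≠ 0 → ∑' y, Q x y * |f y - f x| ≤ C)
    (hdrift : ∀ x, π x ≠ 0 → 0 ≤ ∑' y, Q x y * (f y - f x)) :
    ∃ u ≥ 0, Tendsto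
      (fun N : ℕ => ∑' q : ι × ι, π q.1 * Q q.1 q.2 * (min (f q.2) N - min (f q.1) N))
      atTop (𝓝 u) := by
  have hpair : ∀ q : ι × ι, 0 ≤ π q.1 * Q q.1 q.2 := fun q => mul_nonneg (hπ q.1) (hQ q.1 q.2)
  have hsum : Summable fun q : ι × ι => π q.1 * Q q.1 q.2 * |f q.2 - f q.1| :=
    summable_mul_kernel_mul_of_bounded (b := fun x y => |f y - f x|) hQ hπ hπs
      (fun _ _ => abs_nonneg _) habs hC
  have hsum' : Summable fun q : ι × ι => π q.1 * Q q.1 q.2 * (f q.2 - f q.1) :=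
    hsum.of_norm_bounded fun q => by
      rw [norm_mul, Real.norm_of_nonneg (hpair q), Real.norm_eq_abs]
  exact ⟨∑' q : ι × ι, π q.1 * Q q.1 q.2 * (f q.2 - f q.1),
    tsum_mul_kernel_mul_nonneg (b := fun x y => f y - f x) hπ hsum' hdrift,
    tendsto_tsum_mul_min_sub_min hpair hsum⟩

lemma mul_kernel_mul_le_neg_tsum_indicator (hQ : ∀ x y, 0 ≤ Q x y)
    (hQ1 : ∀ x, HasSum (Q x) 1) (hπ : ∀ x, 0 ≤ π x) (hπs : Summable π)
    (hst : ∀ y, HasSum (fun x => π x * Q x y) (π y)) {g : ι → ℝ} (hg0 : ∀ x, 0 ≤ g x) {N : ℝ}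
    (hgN : ∀ x, g x ≤ N) {D : Set ι} (hgD : ∀ x ∉ D, g x = 0) {x : ι} (hx : x ∉ D) (y : ι) :
    π x * Q x y * g y ≤
      -∑' q : ι × ι, D.indicator π q.1 * Q q.1 q.2 * (g q.2 - g q.1) := by
  have htotal := hasSum_mul_kernel_mul_sub_eq_zero hQ hQ1 hπ hπs hst
    (g := g) fun x => (abs_of_nonneg (hg0 x)).trans_le (hgN x)
  have hind : ∀ q : ι × ι, D.indicator π q.1 * Q q.1 q.2 * (g q.2 - g q.1) =
      (Prod.fst ⁻¹' D).indicator (fun q => π q.1 * Q q.1 q.2 * (g q.2 - g q.1)) q := fun q => by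
    by_cases hq : q.1 ∈ D <;> simp [hq]
  have hdiff := htotal.sub (htotal.summable.indicator (Prod.fst ⁻¹' D)).hasSum
  rw [zero_sub] at hdiff
  simp only [hind]
  refine le_trans (le_of_eq ?_) (le_hasSum hdiff (x, y) fun q _ => ?_)
  · simp [hx, hgD x hx]
  · by_cases hq : q.1 ∈ D
    · simp [hq]
    · simpa [hq, hgD q.1 hq] using mul_nonneg (mul_nonneg (hπ q.1) (hQ q.1 q.2)) (hg0 q.2)

-- Stationarity balances the truncations `min f N`, whose increments out of `{f = 0}` are
-- nonnegative and out of `{0 < f}` have nonnegative total in the limit `N → ∞`.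
lemma mul_kernel_mul_eq_zero_of_drift_nonneg (hQ : ∀ x y, 0 ≤ Q x y)
    (hQ1 : ∀ x, HasSum (Q x) 1) (hπ : ∀ x, 0 ≤ π x) (hπs : Summable π)
    (hst : ∀ y, HasSum (fun x => π x * Q x y) (π y)) {f : ι → ℝ} (hf : ∀ x, 0 ≤ f x) {C : ℝ}
    (habs : ∀ x, 0 < f x → Summable fun y => Q x y * |f y - f x|)
    (hC : ∀ x, 0 < f x → ∑' y, Q x y * |f y - f x| ≤ C)
    (hdrift : ∀ x, 0 < f x → 0 ≤ ∑' y, Q x y * (f y - f x)) {x : ι} (hx : f x = 0) (y : ι) :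
    π x * Q x y * f y = 0 := by
  let D : Set ι := {x | 0 < f x}
  have hmemD : ∀ x, D.indicator π x ≠ 0 → 0 < f x := fun x => Set.mem_of_indicator_ne_zero
  have hnotMem : ∀ x ∉ D, f x = 0 := fun x hxD => (not_lt.mp hxD).antisymm (hf x)
  obtain ⟨u, hu, hlim⟩ := exists_nonneg_tendsto_truncated_drift (π := D.indicator π) hQ
    (Set.indicator_nonneg fun x _ => hπ x) (hπs.indicator D) (fun x h => habs x (hmemD x h))
    (fun x h => hC x (hmemD x h)) fun x h => hdrift x (hmemD x h)
  have hle : π x * Q x y * f y ≤ -u := by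
    refine ge_of_tendsto hlim.neg ?_
    filter_upwards [tendsto_natCast_atTop_atTop.eventually_ge_atTop (f y)] with N hN
    simpa only [min_eq_left hN] using mul_kernel_mul_le_neg_tsum_indicator hQ hQ1 hπ hπs hst
      (g := fun x => min (f x) N) (fun x => le_min (hf x) N.cast_nonneg)
      (fun x => min_le_right _ _) (fun x hxD => by simp [hnotMem x hxD])
      (show x ∉ D from hx.not_gt) y
  exact (hle.trans (neg_nonpos.mpr hu)).antisymm
    (mul_nonneg (mul_nonneg (hπ x) (hQ x y)) (hf y))

end StationaryKernel

section Chain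

variable {m : ℕ}

lemma Pn_nonneg {P : S m → S m → ℝ} (hP : ∀ x y, 0 ≤ P x y) (n : ℕ) (x y : S m) :
    0 ≤ Pn P n x y := by
  induction n generalizing x with
  | zero => exact ite_nonneg zero_le_one le_rfl
  | succ n ih => exact tsum_nonneg fun z => mul_nonneg (hP x z) (ih z)

lemma exists_pos_and_Pn_pos_of_Pn_succ_pos {P : S m → S m → ℝ} (hP : ∀ x y, 0 ≤ P x y) {n : ℕ}
    {x y : S m} (hpos : 0 < Pn P (n + 1) x y) : ∃ z, 0 < P x z ∧ 0 < Pn P n z y := by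
  obtain ⟨z, hz⟩ : ∃ z, P x z * Pn P n z y ≠ 0 := by
    by_contra! hzero
    simp [Pn, hzero] at hpos
  exact ⟨z, (hP x z).lt_of_ne' (left_ne_zero_of_mul hz),
    (Pn_nonneg hP n z y).lt_of_ne' (right_ne_zero_of_mul hz)⟩

lemma ChainIrreducible.forall_of_step {P : S m → S m → ℝ} (hirr : ChainIrreducible P)
    (hP : ∀ x y, 0 ≤ P x y) {p : S m → Prop} (hstep : ∀ x y, p x → 0 < P x y → p y) {x : S m}
    (hx : p x) (y : S m) : p y := by
  obtain ⟨n, -, hn⟩ := hirr x y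
  induction n generalizing x with
  | zero =>
    obtain rfl : x = y := by
      by_contra hxy
      simp [Pn, hxy] at hn
    exact hx
  | succ n ih =>
    obtain ⟨z, hxz, hzy⟩ := exists_pos_and_Pn_pos_of_Pn_succ_pos hP hn
    exact ih (hstep x z hx hxz) hzy

lemma IsStationary.pos {P : S m → S m → ℝ} {pd : S m → ℝ} (hpd : IsStationary P pd)
    (hP : ∀ x y, 0 ≤ P x y) (hirr : ChainIrreducible P) (y : S m) : 0 < pd y := by
  obtain ⟨hpd0, hpd1, hst⟩ := hpd
  obtain ⟨x, hx⟩ : ∃ x, pd x ≠ 0 := by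
    by_contra! hzero
    exact one_ne_zero (hpd1.unique (funext hzero ▸ hasSum_zero))
  refine hirr.forall_of_step hP (p := fun x => 0 < pd x) (fun x y hx hxy => ?_)
    ((hpd0 x).lt_of_ne' hx) y
  exact (mul_pos hx hxy).trans_le (le_hasSum (hst y) x fun w _ => mul_nonneg (hpd0 w) (hP w y))

lemma eq_zero_of_drift_nonneg {P : S m → S m → ℝ} (hP : Stochastic P) (hirr : ChainIrreducible P)
    {pd : S m → ℝ} (hpd : IsStationary P pd) {f : S m → ℝ} (hf : ∀ x, 0 ≤ f x) {C : ℝ}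
    (habs : ∀ x, 0 < f x → Summable fun y => P x y * |f y - f x|)
    (hC : ∀ x, 0 < f x → ∑' y, P x y * |f y - f x| ≤ C)
    (hdrift : ∀ x, 0 < f x → 0 ≤ ∑' y, P x y * (f y - f x)) {x : S m} (hx : f x = 0)
    (y : S m) : f y = 0 := by
  refine hirr.forall_of_step hP.1 (p := fun x => f x = 0) (fun x y hx hxy => ?_) hx y
  have hzero := mul_kernel_mul_eq_zero_of_drift_nonneg hP.1 hP.2 hpd.1 hpd.2.1.summable hpd.2.2
    hf habs hC hdrift hx y
  exact (mul_eq_zero.mp hzero).resolve_left (mul_pos (hpd.pos hP.1 hirr x) hxy).ne'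

end Chain

section LevelDrift

variable {m : ℕ} {A B : ℤ → Matrix (Fin m) (Fin m) ℝ}

lemma hasSum_prod_fintype {β κ : Type*} [Fintype κ] {u : β × κ → ℝ} {a : κ → ℝ}
    (hu : ∀ s, HasSum (fun k => u (k, s)) (a s)) : HasSum u (∑ s, a s) := by
  classical
  have hfiber : ∀ s, HasSum (fun p : β × κ => if p.2 = s then u p else 0) (a s) := fun s => by
    refine (Function.Injective.hasSum_iff (g := fun k : β => (k, s))
      (fun _ _ h => congrArg Prod.fst h) ?_).mp (by simpa [Function.comp_def] using hu s)
    rintro ⟨k, t⟩ hp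
    exact if_neg fun hts : t = s => hp ⟨k, by rw [hts]⟩
  simpa using hasSum_sum fun s (_ : s ∈ Finset.univ) => hfiber s

lemma hasSum_P_mul_of_eq_zero (B : ℤ → Matrix (Fin m) (Fin m) ℝ) {i : ℕ} {j : Fin m}
    {F : ℤ → Fin m → ℝ} (hF : ∀ l ≤ 0, ∀ s, F l s = 0) {a : ℝ}
    (h : HasSum (fun p : ℤ × Fin m => A p.1 j p.2 * F (i + 1 + p.1) p.2) a) :
    HasSum (fun y : S m => P A B (i + 1, j) y * F y.1 y.2) a := by
  let jump : S m → ℤ × Fin m := fun y => (y.1 - (i + 1), y.2)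
  have hjump : jump.Injective := fun y y' hyy' => by
    simp only [jump, Prod.mk.injEq] at hyy'
    exact Prod.ext (by omega) hyy'.2
  have hcomp := (hjump.hasSum_iff ?_).mpr h
  · refine hcomp.congr_fun ?_
    rintro ⟨l | l, s⟩
    · simp [jump, hF 0 le_rfl]
    · have hlevel : (i : ℤ) + 1 + (l - i) = l + 1 := by ring
      simp [jump, P, hlevel]
  · rintro ⟨k, s⟩ hk
    have hle : i + 1 + k ≤ 0 := by
      by_contra! hpos
      exact hk ⟨((i + 1 + k).toNat, s), Prod.ext (by simp only [jump]; omega) rfl⟩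
    simp only [hF _ hle, mul_zero]

lemma hasSum_P_mul_of_eq_const (hP : Stochastic (P A B)) (hphase : PhaseStochastic A) {i : ℕ}
    {j : Fin m} {F : ℤ → Fin m → ℝ} {c : ℝ} (hF : ∀ l ≤ 0, ∀ s, F l s = c) {a : ℝ}
    (h : HasSum (fun p : ℤ × Fin m => A p.1 j p.2 * F (i + 1 + p.1) p.2) a) :
    HasSum (fun y : S m => P A B (i + 1, j) y * F y.1 y.2) a := by
  have hshift := hasSum_P_mul_of_eq_zero B (F := fun l s => F l s - c) (a := a - 1 * c)
    (fun l hl s => sub_eq_zero.mpr (hF l hl s))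
    (by simpa only [mul_sub] using h.sub ((hphase j).mul_right c))
  simpa only [mul_sub, sub_add_cancel] using hshift.add ((hP.2 (i + 1, j)).mul_right c)

/-- The Lyapunov function `(l + h(s))⁺` on levels and phases, which corrects the level `l` by the
phase-dependent term `h`. -/
def levelHeight (h : Fin m → ℝ) (l : ℤ) (s : Fin m) : ℝ := max (l + h s) 0

lemma levelHeight_of_nonpos {h : Fin m → ℝ} (hh : h ≤ 0) {l : ℤ} (hl : l ≤ 0) (s : Fin m) :
    levelHeight h l s = 0 :=
  max_eq_right (add_nonpos (mod_cast hl) (hh s))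

lemma abs_levelHeight_sub_le (h : Fin m → ℝ) (l k : ℤ) (s j : Fin m) :
    |levelHeight h (l + k) s - levelHeight h l j| ≤ |(k : ℝ)| + |h s - h j| := by
  calc |levelHeight h (l + k) s - levelHeight h l j|
      ≤ |((l + k : ℤ) + h s) - (l + h j)| := by
        simpa [levelHeight] using abs_max_sub_max_le_max ((l + k : ℤ) + h s) 0 (l + h j) 0
    _ = |k + (h s - h j)| := by push_cast; ring_nf
    _ ≤ |(k : ℝ)| + |h s - h j| := abs_add_le _ _

lemma le_levelHeight_sub {h : Fin m → ℝ} {l : ℤ} {j : Fin m} (hpos : 0 < levelHeight h l j)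
    (k : ℤ) (s : Fin m) :
    k + (h s - h j) ≤ levelHeight h (l + k) s - levelHeight h l j := by
  have hl : levelHeight h l j = l + h j := by
    unfold levelHeight at hpos ⊢
    exact max_eq_left_of_lt (by simpa using hpos)
  have hlk : ((l + k : ℤ) : ℝ) + h s ≤ levelHeight h (l + k) s := le_max_left _ _
  push_cast at hlk
  linarith

lemma hasSum_mul_jump_add (hphase : PhaseStochastic A) {b : ℤ → ℝ} {j : Fin m}
    (hb : ∀ s, Summable fun k => A k j s * b k) (d : Fin m → ℝ) :
    HasSum (fun p : ℤ × Fin m => A p.1 j p.2 * (b p.1 + d p.2))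
      (∑ s, ∑' k, A k j s * b k + (matA A).mulVec d j) := by
  simp only [mul_add, Matrix.mulVec, dotProduct, ← Finset.sum_add_distrib]
  exact hasSum_prod_fintype fun s =>
    (hb s).hasSum.add ((summable_of_phaseStochastic hphase j s).hasSum.mul_right (d s))

lemma matA_mulVec_sub_const (hphase : PhaseStochastic A) (h : Fin m → ℝ) (c : ℝ) (j : Fin m) :
    (matA A).mulVec (fun s => h s - c) j = (matA A).mulVec h j - c := by
  have hsub : (fun s => h s - c) = h - c • (1 : Fin m → ℝ) := by
    ext s
    simp
  rw [hsub, Matrix.mulVec_sub, Matrix.mulVec_smul, matA_mulVec_one hphase]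
  simp

lemma summable_jump_mul_abs_levelHeight_sub (hA0 : ∀ k r s, 0 ≤ A k r s)
    (hphase : PhaseStochastic A) {j : Fin m}
    (habs : ∀ s, Summable fun k : ℤ => A k j s * |(k : ℝ)|) (h : Fin m → ℝ) (l : ℤ) :
    Summable fun p : ℤ × Fin m =>
      A p.1 j p.2 * |levelHeight h (l + p.1) p.2 - levelHeight h l j| :=
  (hasSum_mul_jump_add hphase habs fun s => |h s - h j|).summable.of_nonneg_of_le
    (fun p => mul_nonneg (hA0 p.1 j p.2) (abs_nonneg _))
    fun p => mul_le_mul_of_nonneg_left (abs_levelHeight_sub_le h l p.1 p.2 j) (hA0 p.1 j p.2)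

lemma exists_hasSum_P_mul_abs_levelHeight_sub (hA0 : ∀ k r s, 0 ≤ A k r s) (hP : Stochastic (P A B))
    (hphase : PhaseStochastic A) {j : Fin m}
    (habs : ∀ s, Summable fun k : ℤ => A k j s * |(k : ℝ)|) {h : Fin m → ℝ} (hh : h ≤ 0) (i : ℕ) :
    ∃ c ≤ ∑ s, ∑' k : ℤ, A k j s * |(k : ℝ)| + (matA A).mulVec (fun s => |h s - h j|) j,
      HasSum (fun y : S m =>
        P A B (i + 1, j) y * |levelHeight h y.1 y.2 - levelHeight h (i + 1) j|) c := by
  have hsum := (summable_jump_mul_abs_levelHeight_sub hA0 hphase habs h (i + 1)).hasSum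
  refine ⟨_, hasSum_le (fun p => ?_) hsum (hasSum_mul_jump_add hphase habs _),
    hasSum_P_mul_of_eq_const hP hphase
      (F := fun l s => |levelHeight h l s - levelHeight h (i + 1) j|)
      (fun l hl s => by rw [levelHeight_of_nonpos hh hl]) hsum⟩
  exact mul_le_mul_of_nonneg_left (abs_levelHeight_sub_le h _ p.1 p.2 j) (hA0 p.1 j p.2)

lemma le_tsum_P_mul_levelHeight_sub (hA0 : ∀ k r s, 0 ≤ A k r s) (hP : Stochastic (P A B))
    (hphase : PhaseStochastic A) {j : Fin m}
    (habs : ∀ s, Summable fun k : ℤ => A k j s * |(k : ℝ)|) {h : Fin m → ℝ} (hh : h ≤ 0) {i : ℕ}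
    (hpos : 0 < levelHeight h (i + 1) j) :
    meanJump A id j + (matA A).mulVec h j - h j ≤
      ∑' y : S m, P A B (i + 1, j) y * (levelHeight h y.1 y.2 - levelHeight h (i + 1) j) := by
  have hnorm : ∀ (k : ℤ) (s : Fin m) (t : ℝ), ‖A k j s * t‖ = A k j s * |t| := fun k s t => by
    rw [norm_mul, Real.norm_of_nonneg (hA0 k j s), Real.norm_eq_abs]
  have hincr : Summable fun p : ℤ × Fin m =>
      A p.1 j p.2 * (levelHeight h (i + 1 + p.1) p.2 - levelHeight h (i + 1) j) :=
    (summable_jump_mul_abs_levelHeight_sub hA0 hphase habs h (i + 1)).of_norm_bounded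
      fun p => (hnorm p.1 p.2 _).le
  have hmean : HasSum (fun p : ℤ × Fin m => A p.1 j p.2 * (p.1 + (h p.2 - h j)))
      (meanJump A id j + (matA A).mulVec (fun s => h s - h j) j) :=
    hasSum_mul_jump_add (b := fun k : ℤ => (k : ℝ)) hphase
      (fun s => (habs s).of_norm_bounded fun k => (hnorm k s k).le) fun s => h s - h j
  rw [(hasSum_P_mul_of_eq_const hP hphase
    (F := fun l s => levelHeight h l s - levelHeight h (i + 1) j)
    (fun l hl s => by rw [levelHeight_of_nonpos hh hl]) hincr.hasSum).tsum_eq, add_sub_assoc,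
    ← matA_mulVec_sub_const hphase]
  refine hasSum_le (fun p => ?_) hmean hincr.hasSum
  exact mul_le_mul_of_nonneg_left (le_levelHeight_sub hpos p.1 p.2) (hA0 p.1 j p.2)

-- Otherwise `levelHeight h` would be a nonnegative function with nonnegative drift off its zero
-- set, hence identically zero.
lemma exists_drift_neg_of_isStationary [NeZero m] (hA0 : ∀ k r s, 0 ≤ A k r s)
    (hP : Stochastic (P A B)) (hirr : ChainIrreducible (P A B)) (hphase : PhaseStochastic A)
    {pd : S m → ℝ} (hpd : IsStationary (P A B) pd)
    (habs : ∀ r s, Summable fun k : ℤ => A k r s * |(k : ℝ)|) {h : Fin m → ℝ} (hh : h ≤ 0) :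
    ∃ r, meanJump A id r + (matA A).mulVec h r - h r < 0 := by
  by_contra! hdrift
  obtain ⟨C, hC⟩ := Finite.exists_le fun j =>
    ∑ s, ∑' k : ℤ, A k j s * |(k : ℝ)| + (matA A).mulVec (fun s => |h s - h j|) j
  have hlevel : ∀ x : S m, 0 < levelHeight h x.1 x.2 → ∃ i j, x = (i + 1, j) := by
    rintro ⟨_ | i, j⟩ hx
    · exact absurd (levelHeight_of_nonpos hh le_rfl j) hx.ne'
    · exact ⟨i, j, rfl⟩
  have hstep : ∀ i j, ∃ c ≤ C, HasSum (fun y : S m =>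
      P A B (i + 1, j) y * |levelHeight h y.1 y.2 - levelHeight h (i + 1) j|) c := fun i j =>
    (exists_hasSum_P_mul_abs_levelHeight_sub hA0 hP hphase (habs j) hh i).imp
      fun c hc => ⟨hc.1.trans (hC j), hc.2⟩
  have hzero : ∀ y : S m, levelHeight h y.1 y.2 = 0 := by
    refine eq_zero_of_drift_nonneg hP hirr hpd (fun y => le_max_right _ _) (C := C)
      ?_ ?_ ?_ (x := (0, 0)) (levelHeight_of_nonpos hh le_rfl 0)
    all_goals
      intro x hx
      obtain ⟨i, j, rfl⟩ := hlevel x hx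
      obtain ⟨c, hc, hsum⟩ := hstep i j
      push_cast at hx ⊢
    · exact hsum.summable
    · exact hsum.tsum_eq.trans_le hc
    · exact (hdrift j).trans (le_tsum_P_mul_levelHeight_sub hA0 hP hphase (habs j) hh hx)
  obtain ⟨n, hn⟩ := exists_nat_gt (-h 0)
  have hpos : 0 < levelHeight h n 0 := lt_max_of_lt_left (by push_cast; linarith)
  exact hpos.ne' (hzero (n, 0))

end LevelDrift

lemma exists_truncated_drift_neg {m : ℕ} [NeZero m]
    {A B : ℤ → Matrix (Fin m) (Fin m) ℝ} (hA0 : ∀ k r s, 0 ≤ A k r s)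
    (hP : Stochastic (P A B)) (hirr : ChainIrreducible (P A B)) (hphase : PhaseStochastic A)
    {pd : S m → ℝ} (hpd : IsStationary (P A B) pd)
    (hpos : ∀ r s, Summable fun k : ℤ => A k r s * max (k : ℝ) 0)
    {α : Fin m → ℝ} (hα : ∀ r, 0 < α r) (hα1 : α ⬝ᵥ 1 = 1)
    (hαA : Matrix.vecMul α (matA A) = α) (hirrA : (matA A).IsIrreducible) :
    ∃ K, α ⬝ᵥ meanJump A (truncJump K) < 0 := by
  by_contra! hdrift
  have habs := summable_mul_abs_of_truncated_drift_nonneg hA0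
    (summable_of_phaseStochastic hphase) hpos hα hdrift
  have hmean := drift_nonneg_of_truncated_drift_nonneg hA0 (fun r => (hα r).le) habs hdrift
  obtain ⟨h, hh, hpoisson⟩ := exists_nonpos_poisson_solution hirrA (matA_mulVec_one hphase) hα1
    hαA (meanJump A id)
  obtain ⟨r, hr⟩ := exists_drift_neg_of_isStationary hA0 hP hirr hphase hpd habs hh
  exact hmean.not_gt (hpoisson r ▸ hr)

theorem chi_lt_one_and_eigenvector_general {m : ℕ} [NeZero m]
    {A B : ℤ → Matrix (Fin m) (Fin m) ℝ} (hA0 : ∀ k r s, 0 ≤ A k r s)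
    (hP : Stochastic (P A B)) (hirr : ChainIrreducible (P A B)) (hphase : PhaseStochastic A)
    (hphaseirr : MatIrreducible (matA A)) {pd : S m → ℝ} (hpd : IsStationary (P A B) pd)
    {z : ℝ} (hz : 1 < z) (hzη : ENNReal.ofReal z < min (phiA A) (eta A)) :
    chi (AstarR A z) < 1 ∧
      ∃ Y : Fin m → ℝ, (∀ r, 1 ≤ Y r) ∧
        (AstarR A z).mulVec Y = chi (AstarR A z) • Y := by
  have hirrA := hphaseirr.isIrreducible (matA_nonneg hA0)
  have hsumz := summable_AstarR hA0 hphase hz.le (hzη.trans_le (min_le_left _ _))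
  obtain ⟨α, hα, hα1, hαA⟩ := exists_pos_stationary_of_isIrreducible hirrA (matA_mulVec_one hphase)
  obtain ⟨K, hK⟩ := exists_truncated_drift_neg hA0 hP hirr hphase hpd
    (fun r s => summable_mul_max_zero_of_zpow (fun k => hA0 k r s) hz (hsumz r s)) hα hα1 hαA hirrA
  obtain ⟨h, -, hpoisson⟩ := exists_nonpos_poisson_solution hirrA (matA_mulVec_one hphase) hα1
    hαA (meanJump A (truncJump K))
  exact ⟨chi_AstarR_lt_one_of_exists hA0 hphase hirrA hzη
      (exists_chi_AstarR_lt_one hA0 hphase hirrA hz hsumz fun r => (hpoisson r).trans_lt hK),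
    exists_one_le_mulVec_eq_chi_smul
      (isIrreducible_AstarR hA0 hirrA (one_pos.trans hz) hsumz)⟩

/-- For an irreducible, aperiodic, positive recurrent `GI/G/1`-type Markov
chain with stochastic phase matrix `A` and `φ_{A+} > 1`: for every real `z` with
`1 < z < min(φ_{A+}, η)` we have `χ(z) < 1`, and there is a Perron–Frobenius right
eigenvector `Y(z) ≥ e` with `A*(z) Y(z) = χ(z) Y(z)`. -/
theorem chi_lt_one_and_eigenvector {m : ℕ} (hm : 0 < m)
    (A B : ℤ → Matrix (Fin m) (Fin m) ℝ)
    (hA0 : ∀ k r s, 0 ≤ A k r s) (hB0 : ∀ k r s, 0 ≤ B k r s)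
    (hP : Stochastic (P A B))
    (hirr : ChainIrreducible (P A B)) (hap : ChainAperiodic (P A B))
    (hphase : PhaseStochastic A) (hphaseirr : MatIrreducible (matA A))
    (pd : S m → ℝ) (hpd : IsStationary (P A B) pd)
    (hphi : 1 < phiA A) :
    ∀ z : ℝ, 1 < z → ENNReal.ofReal z < min (phiA A) (eta A) →
      chi (AstarR A z) < 1 ∧
        ∃ Y : Fin m → ℝ, (∀ r, 1 ≤ Y r) ∧
          (AstarR A z).mulVec Y = chi (AstarR A z) • Y := by
  have : NeZero m := ⟨hm.ne'⟩
  exact fun z => chi_lt_one_and_eigenvector_general hA0 hP hirr hphase hphaseirr hpd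

end GIG1
end

section
/- Let z > 1 be a real number, let the A_k (k ∈ ℤ) be nonnegative m×m matrices such that A*(z) = Σ_{k∈ℤ} z^k A_k is finite entrywise, let Y be a column vector with all entries ≥ 1 and maximum entry α, let 0 < δ < 1, and suppose A*(z) Y = (1−δ) Y. Let {B_{−i}}_{i≥1} be nonnegative m×m matrices with B_{−i} e ≤ e for all i. If N is a positive integer with α z^{−N} ≤ δ/2, then for every i > N the entrywise inequality z^{−i} B_{−i} Y + Σ_{k=−i+1}^{∞} z^k A_k Y ≤ (1 − δ/2) Y holds. -/
open Filter Topology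
open scoped ENNReal NNReal BigOperators

namespace GIG1

/-!
Every term `z ^ k A_k Y` is nonnegative, so the truncated series is at most `A*(z) Y = (1 - δ) Y`.
Since the rows of `B_{-i}` have total mass at most one, `B_{-i} Y` is at most the bound `α` of `Y`,
so the boundary term is at most `α z ^ (-i) ≤ α z ^ (-N) ≤ δ / 2`, which is at most `(δ / 2) Y`
because `Y ≥ 1`.
-/

section Matrix

open Matrix

variable {β ι κ R : Type*} [Fintype κ]

theorem dotProduct_le_of_sum_le_one [Semiring R] [PartialOrder R] [IsOrderedRing R]
    {w v : κ → R} {a : R} (hw : 0 ≤ w) (hw_sum : ∑ s, w s ≤ 1) (ha : 0 ≤ a) (hv : ∀ s, v s ≤ a) :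
    w ⬝ᵥ v ≤ a :=
  calc
    w ⬝ᵥ v ≤ ∑ s, w s * a := dotProduct_le_dotProduct_of_nonneg_left hv hw
    _ = (∑ s, w s) * a := (Finset.sum_mul ..).symm
    _ ≤ a := mul_le_of_le_one_left ha hw_sum

theorem zpow_neg_mul_mulVec_le {z : ℝ} (hz : 1 ≤ z) {M : Matrix ι κ ℝ} {r : ι}
    (hM : ∀ s, 0 ≤ M r s) (hM_sum : ∑ s, M r s ≤ 1) {v : κ → ℝ} {a : ℝ} (ha : 0 ≤ a)
    (hv : ∀ s, v s ≤ a) {N i : ℕ} (hi : N ≤ i) :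
    z ^ (-(i : ℤ)) * (M *ᵥ v) r ≤ a * z ^ (-(N : ℤ)) := by
  have hzpow : z ^ (-(i : ℤ)) ≤ z ^ (-(N : ℤ)) := zpow_le_zpow_right₀ hz (by lia)
  calc
    z ^ (-(i : ℤ)) * (M *ᵥ v) r ≤ z ^ (-(i : ℤ)) * a := by
      gcongr
      exact dotProduct_le_of_sum_le_one hM hM_sum ha hv
    _ ≤ z ^ (-(N : ℤ)) * a := by gcongr
    _ = a * z ^ (-(N : ℤ)) := mul_comm ..

theorem hasSum_mulVec [NonUnitalNonAssocSemiring R] [TopologicalSpace R] [IsTopologicalSemiring R]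
    {F : β → Matrix ι κ R} {M : Matrix ι κ R} (hF : HasSum F M) (v : κ → R) :
    HasSum (fun b => F b *ᵥ v) (M *ᵥ v) :=
  hF.map (mulVec.addMonoidHomLeft v) (continuous_id.matrix_mulVec continuous_const)

theorem tsum_subtype_mulVec_le {F : β → Matrix ι κ ℝ} {M : Matrix ι κ ℝ} (hF : HasSum F M)
    (hF_nonneg : ∀ b r s, 0 ≤ F b r s) {v : κ → ℝ} (hv : 0 ≤ v) (t : Set β) (r : ι) :
    ∑' b : t, (F b *ᵥ v) r ≤ (M *ᵥ v) r := by
  have hrow : HasSum (fun b => (F b *ᵥ v) r) ((M *ᵥ v) r) := Pi.hasSum.1 (hasSum_mulVec hF v) r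
  rw [← hrow.tsum_eq]
  exact hrow.summable.tsum_subtype_le _ t fun b => dotProduct_nonneg_of_nonneg (hF_nonneg b r) hv

end Matrix

theorem hasSum_AstarR {m : ℕ} {A : ℤ → Matrix (Fin m) (Fin m) ℝ} {z : ℝ}
    (hA : ∀ r s, Summable fun k : ℤ => A k r s * z ^ k) :
    HasSum (fun k : ℤ => z ^ k • A k) (AstarR A z) := by
  refine Pi.hasSum.2 fun r => Pi.hasSum.2 fun s => ?_
  simpa only [AstarR, Matrix.of_apply, Matrix.smul_apply, smul_eq_mul, mul_comm]
    using (hA r s).hasSum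

open Matrix in
theorem drift_inequality_general {ι : Type*} [Fintype ι] {z : ℝ} (hz : 1 ≤ z)
    {A : ℤ → Matrix ι ι ℝ} (hA0 : ∀ k r s, 0 ≤ A k r s)
    {M : Matrix ι ι ℝ} (hAM : HasSum (fun k : ℤ => z ^ k • A k) M)
    {Y : ι → ℝ} (hY1 : ∀ r, 1 ≤ Y r) {α : ℝ} (hα : ∀ r, Y r ≤ α)
    {ρ : ℝ} (hMY : M *ᵥ Y ≤ ρ • Y)
    {B : ℕ → Matrix ι ι ℝ} (hB0 : ∀ i r s, 0 ≤ B i r s)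
    (hBrow : ∀ i, 1 ≤ i → ∀ r, ∑ s, B i r s ≤ 1)
    {N : ℕ} {ε : ℝ} (hNε : α * z ^ (-(N : ℤ)) ≤ ε) {i : ℕ} (hi : N < i) (r : ι) :
    z ^ (-(i : ℤ)) * (B i *ᵥ Y) r
        + ∑' k : {k : ℤ // -(i : ℤ) + 1 ≤ k}, z ^ (k : ℤ) * (A k *ᵥ Y) r
      ≤ (ρ + ε) * Y r := by
  have hz0 : 0 ≤ z := zero_le_one.trans hz
  have hα0 : 0 ≤ α := zero_le_one.trans ((hY1 r).trans (hα r))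
  have hε0 : 0 ≤ ε := (mul_nonneg hα0 (zpow_nonneg hz0 _)).trans hNε
  have hboundary : z ^ (-(i : ℤ)) * (B i *ᵥ Y) r ≤ ε * Y r :=
    calc
      z ^ (-(i : ℤ)) * (B i *ᵥ Y) r ≤ α * z ^ (-(N : ℤ)) :=
        zpow_neg_mul_mulVec_le hz (hB0 i r) (hBrow i (by lia) r) hα0 hα hi.le
      _ ≤ ε := hNε
      _ ≤ ε * Y r := le_mul_of_one_le_right hε0 (hY1 r)
  have htail : ∑' k : {k : ℤ // -(i : ℤ) + 1 ≤ k}, z ^ (k : ℤ) * (A k *ᵥ Y) r ≤ ρ * Y r := by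
    have htsum := tsum_subtype_mulVec_le hAM
      (fun k r s => mul_nonneg (zpow_nonneg hz0 k) (hA0 k r s))
      (fun s => zero_le_one.trans (hY1 s)) {k : ℤ | -(i : ℤ) + 1 ≤ k} r
    simp only [smul_mulVec] at htsum
    exact htsum.trans (hMY r)
  linarith

/-- Let `z > 1`, let `A*(z) = ∑_{k∈ℤ} z^k A_k` be finite entrywise, let `Y ≥ e`
have maximum entry `α`, let `0 < δ < 1` with `A*(z) Y = (1-δ) Y`, and let `{B_{-i}}_{i≥1}` be
nonnegative with row sums at most 1.  If `N ≥ 1` satisfies `α z^{-N} ≤ δ/2`, then for all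
`i > N`, entrywise `z^{-i} B_{-i} Y + ∑_{k=-i+1}^∞ z^k A_k Y ≤ (1 - δ/2) Y`. -/
theorem drift_inequality {m : ℕ} (hm : 0 < m)
    (z : ℝ) (hz : 1 < z)
    (A : ℤ → Matrix (Fin m) (Fin m) ℝ) (hA0 : ∀ k r s, 0 ≤ A k r s)
    (hAsum : ∀ r s, Summable fun k : ℤ => A k r s * z ^ k)
    (Y : Fin m → ℝ) (hY1 : ∀ r, 1 ≤ Y r)
    (α : ℝ) (hα : IsGreatest (Set.range Y) α)
    (δ : ℝ) (hδ0 : 0 < δ) (hδ1 : δ < 1)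
    (heig : (AstarR A z).mulVec Y = (1 - δ) • Y)
    (B : ℕ → Matrix (Fin m) (Fin m) ℝ) (hB0 : ∀ i r s, 0 ≤ B i r s)
    (hBrow : ∀ i, 1 ≤ i → ∀ r, ∑ s, B i r s ≤ 1)
    (N : ℕ) (hN : 0 < N) (hNα : α * z ^ (-(N : ℤ)) ≤ δ / 2) :
    ∀ i : ℕ, N < i → ∀ r : Fin m,
      z ^ (-(i : ℤ)) * (B i).mulVec Y r
          + (∑' k : {k : ℤ // -(i : ℤ) + 1 ≤ k}, z ^ (k : ℤ) * ((A k).mulVec Y r))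
        ≤ (1 - δ / 2) * Y r :=
  fun _ hi r => (drift_inequality_general hz.le hA0 (hasSum_AstarR hAsum) hY1
    (fun s => hα.2 ⟨s, rfl⟩) heig.le hB0 hBrow hNα hi r).trans_eq (by ring)

end GIG1
end
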